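/- The sequence of trapezoidally-discretized joint state-path and parameter log-posteriors ℓ̂_i hypo-converges, on the space 𝒵 := W²_n × ℝ^q × ℝ^m equipped with the topology of the norm ‖·‖_{W²} on the first factor and the Euclidean norms on the others, to the continuous-time (Onsager–Machlup) log-posterior ℓ. -/

import Mathlib

open MeasureTheory Filter Set

/-- `ℝⁿ` with the Euclidean norm. -/
abbrev Eu (n : ℕ) := EuclideanSpace ℝ (Fin n)

/-- `ln` with values in `ℝ̄ = EReal` and `ln 0 := −∞`. -/
noncomputable def elog (r : ℝ) : EReal := if r ≤ 0 then ⊥ else ((Real.log r : ℝ) : EReal)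

/-- `(x, x')` is an element of `W²` on `[0, t_f]`: `x` is absolutely continuous with
a.e. derivative `x' ∈ L²`. -/
def IsW2 {n : ℕ} (tf : ℝ) (x x' : ℝ → Eu n) : Prop :=
  IntegrableOn x' (Icc 0 tf) ∧ IntegrableOn (fun t => ‖x' t‖ ^ 2) (Icc 0 tf) ∧
    ∀ t ∈ Icc (0:ℝ) tf, x t = x 0 + ∫ s in Ioc (0:ℝ) t, x' s

/-- The `W²` distance `‖x − y‖_{W²}` between `(x, x')` and `(y, y')`. -/
noncomputable def W2dist {n : ℕ} (tf : ℝ) (x x' y y' : ℝ → Eu n) : ℝ :=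
  Real.sqrt (‖x 0 - y 0‖ ^ 2 + ∫ s in Ioc (0:ℝ) tf, ‖x' s - y' s‖ ^ 2)

/-- `g ∈ PL(𝒫, ℝⁿ)`: `g` is continuous on `[0, t_f]` and affine on each subinterval
of the partition `t_0 < t_1 < ⋯ < t_N`. -/
def IsPL {n : ℕ} (tf : ℝ) (N : ℕ) (tP : ℕ → ℝ) (g : ℝ → Eu n) : Prop :=
  ContinuousOn g (Icc 0 tf) ∧
    ∀ k < N, ∃ a b : Eu n, ∀ s ∈ Icc (tP k) (tP (k + 1)), g s = a + s • b

/-- `zh` is the trapezoidally-discretized clean-state path associated with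
`(xh, ζ, ϑ)`. -/
def IsTrapPath {n q m : ℕ} (N : ℕ) (tP : ℕ → ℝ)
    (h : ℝ → Eu n → Eu q → Eu m → Eu q)
    (xh : ℝ → Eu n) (ζ : Eu q) (ϑ : Eu m) (zh : ℝ → Eu q) : Prop :=
  zh 0 = ζ ∧ ∀ k < N, ∀ s ∈ Ioc (tP k) (tP (k + 1)),
    zh s = zh (tP k) + ((s - tP k) / 2) •
      (h (tP k) (xh (tP k)) (zh (tP k)) ϑ +
       h (tP (k + 1)) (xh (tP (k + 1))) (zh (tP (k + 1))) ϑ)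

/-- The sum defining the quadratic (energy) term of the trapezoidally-discretized
log-posterior. -/
noncomputable def trapSum {n q m : ℕ} (N : ℕ) (tP : ℕ → ℝ)
    (f : ℝ → Eu n → Eu q → Eu m → Eu n) (Ginv : Eu n → Eu n)
    (xh : ℝ → Eu n) (zh : ℝ → Eu q) (ϑ : Eu m) : ℝ :=
  ∑ k ∈ Finset.range N, (tP (k + 1) - tP k) *
    ‖Ginv ((tP (k + 1) - tP k)⁻¹ • (xh (tP (k + 1)) - xh (tP k))
      - ((1:ℝ) / 2) • f (tP k) (xh (tP k)) (zh (tP k)) ϑ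
      - ((1:ℝ) / 2) • f (tP (k + 1)) (xh (tP (k + 1))) (zh (tP (k + 1))) ϑ)‖ ^ 2

/-- The sum `Σ_k ln det(I − ½ δ_k ∇ₓf(t_{k+1}, x̂(t_{k+1}), ẑ(t_{k+1}), ϑ))` of the
trapezoidally-discretized log-posterior. -/
noncomputable def detSum {n q m : ℕ} (N : ℕ) (tP : ℕ → ℝ)
    (Dxf : ℝ → Eu n → Eu q → Eu m → (Eu n →L[ℝ] Eu n))
    (xh : ℝ → Eu n) (zh : ℝ → Eu q) (ϑ : Eu m) : EReal :=
  ∑ k ∈ Finset.range N, elog (LinearMap.det (ContinuousLinearMap.toLinearMap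
    ((1 : Eu n →L[ℝ] Eu n) - ((tP (k + 1) - tP k) / 2) •
      Dxf (tP (k + 1)) (xh (tP (k + 1))) (zh (tP (k + 1))) ϑ)))

/-- `v` is the value `ℓ̂(x̂, ζ, ϑ)` of the trapezoidally-discretized joint state-path
and parameter log-posterior: `−∞` unless `x̂ ∈ PL(𝒫)` and `ϑ ∈ S`, in which case it
is `ln ψ + ln π + Σ ln det(I − ½δ_k ∇ₓf) − ½ Σ δ_k |G⁻¹[Δx̂_k/δ_k − ½f̂_k − ½f̂_{k+1}]|²`
with the trapezoidal clean-state path. -/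
def TrapVal {n q m : ℕ} (tf : ℝ) (N : ℕ) (tP : ℕ → ℝ) (S : Set (Eu m))
    (f : ℝ → Eu n → Eu q → Eu m → Eu n) (h : ℝ → Eu n → Eu q → Eu m → Eu q)
    (Dxf : ℝ → Eu n → Eu q → Eu m → (Eu n →L[ℝ] Eu n))
    (ψ : (ℝ → Eu n) → (ℝ → Eu q) → Eu m → ℝ) (pr : Eu n → Eu q → Eu m → ℝ)
    (Ginv : Eu n → Eu n)
    (xh : ℝ → Eu n) (ζ : Eu q) (ϑ : Eu m) (v : EReal) : Prop :=
  (¬(IsPL tf N tP xh ∧ ϑ ∈ S) → v = ⊥) ∧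
  ((IsPL tf N tP xh ∧ ϑ ∈ S) → ∃ zh : ℝ → Eu q, IsTrapPath N tP h xh ζ ϑ zh ∧
    v = elog (ψ xh zh ϑ) + elog (pr (xh 0) ζ ϑ) + detSum N tP Dxf xh zh ϑ
      - ((((1:ℝ) / 2) * trapSum N tP f Ginv xh zh ϑ : ℝ) : EReal))

/-- `v` is the value `ℓ(x, z₀, θ)` of the continuous-time (Onsager–Machlup)
log-posterior: `−∞` unless `θ ∈ S`, in which case it is
`ln ψ + ln π − ½ ∫ |G⁻¹[f − ẋ]|² dt − ½ ∫ divₓ f dt` with `z` the solution of the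
clean-state ODE. -/
def OMVal {n q m : ℕ} (tf : ℝ) (S : Set (Eu m))
    (f : ℝ → Eu n → Eu q → Eu m → Eu n) (h : ℝ → Eu n → Eu q → Eu m → Eu q)
    (Dxf : ℝ → Eu n → Eu q → Eu m → (Eu n →L[ℝ] Eu n))
    (ψ : (ℝ → Eu n) → (ℝ → Eu q) → Eu m → ℝ) (pr : Eu n → Eu q → Eu m → ℝ)
    (Ginv : Eu n → Eu n)
    (x x' : ℝ → Eu n) (z0 : Eu q) (θ : Eu m) (v : EReal) : Prop :=
  (θ ∉ S → v = ⊥) ∧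
  (θ ∈ S → ∃ z : ℝ → Eu q, ContinuousOn z (Icc 0 tf) ∧
    (∀ t ∈ Icc (0:ℝ) tf, z t = z0 + ∫ s in Ioc (0:ℝ) t, h s (x s) (z s) θ) ∧
    v = elog (ψ x z θ) + elog (pr (x 0) z0 θ)
      - ((((1:ℝ) / 2) * ∫ t in Ioc (0:ℝ) tf,
          ‖Ginv (f t (x t) (z t) θ - x' t)‖ ^ 2 : ℝ) : EReal)
      - ((((1:ℝ) / 2) * ∫ t in Ioc (0:ℝ) tf,
          LinearMap.trace ℝ (Eu n)
            (ContinuousLinearMap.toLinearMap (Dxf t (x t) (z t) θ)) : ℝ) : EReal))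


structure Ptn (tf d : ℝ) (N : ℕ) (t : ℕ → ℝ) : Prop where
  h0 : t 0 = 0
  hN : t N = tf
  mono : ∀ k < N, t k < t (k + 1)
  mesh : ∀ k < N, t (k + 1) - t k ≤ d

namespace Ptn
variable {tf d : ℝ} {N : ℕ} {t : ℕ → ℝ}

lemma le (P : Ptn tf d N t) {j k : ℕ} (hjk : j ≤ k) (hk : k ≤ N) : t j ≤ t k := by
  induction k, hjk using Nat.le_induction with
  | base => exact le_rfl
  | succ k hk' ih => exact (ih (by omega)).trans (P.mono k (by omega)).le

lemma mem (P : Ptn tf d N t) {k : ℕ} (hk : k ≤ N) : t k ∈ Icc (0:ℝ) tf :=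
  ⟨P.h0 ▸ P.le (Nat.zero_le k) hk, P.hN ▸ P.le hk le_rfl⟩

lemma sub (P : Ptn tf d N t) {k : ℕ} (hk : k < N) : Ioc (t k) (t (k+1)) ⊆ Ioc (0:ℝ) tf :=
  Ioc_subset_Ioc (P.mem hk.le).1 (P.mem hk).2

lemma sumδ (P : Ptn tf d N t) : ∑ k ∈ Finset.range N, (t (k+1) - t k) = tf := by
  rw [Finset.sum_range_sub, P.h0, P.hN, sub_zero]

lemma split {E : Type*} [NormedAddCommGroup E] [NormedSpace ℝ E] (P : Ptn tf d N t) {g : ℝ → E}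
    (hg : IntegrableOn g (Ioc 0 tf)) :
    ∑ k ∈ Finset.range N, ∫ s in Ioc (t k) (t (k+1)), g s = ∫ s in Ioc (0:ℝ) tf, g s := by
  have h := intervalIntegral.sum_integral_adjacent_intervals (f := g) (μ := volume) (a := t) (n := N)
    (fun k hk => (intervalIntegrable_iff_integrableOn_Ioc_of_le (P.mono k hk).le).2
      (hg.mono_set (P.sub hk)))
  rw [P.h0, P.hN, intervalIntegral.integral_of_le (by simpa [P.h0] using (P.mem (Nat.zero_le N)).2)] at h
  rw [← h]
  refine Finset.sum_congr rfl fun k hk => ?_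
  rw [intervalIntegral.integral_of_le (P.mono k (Finset.mem_range.1 hk)).le]

lemma cover (P : Ptn tf d N t) {s : ℝ} (hs : s ∈ Ioc (0:ℝ) tf) :
    ∃ k < N, s ∈ Ioc (t k) (t (k+1)) := by
  classical
  have hex : ∃ k, s ≤ t k := ⟨N, by rw [P.hN]; exact hs.2⟩
  have h1 := Nat.find_spec hex
  have h2 : Nat.find hex ≤ N := Nat.find_min' hex (by rw [P.hN]; exact hs.2)
  obtain ⟨k, hk⟩ : ∃ k, Nat.find hex = k + 1 := by
    refine Nat.exists_eq_succ_of_ne_zero fun h => ?_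
    rw [h, P.h0] at h1
    exact absurd hs.1 (not_lt.2 h1)
  refine ⟨k, by omega, ?_, hk ▸ h1⟩
  have := Nat.find_min hex (m := k) (by omega)
  exact not_le.1 this

end Ptn

lemma jensen {E : Type*} [NormedAddCommGroup E] [NormedSpace ℝ E] {a b : ℝ} (hab : a < b) {u : ℝ → E}
    (hu : IntegrableOn u (Ioc a b)) (hu2 : IntegrableOn (fun s => ‖u s‖ ^ 2) (Ioc a b)) :
    (b - a) * ‖(b - a)⁻¹ • ∫ s in Ioc a b, u s‖ ^ 2 ≤ ∫ s in Ioc a b, ‖u s‖ ^ 2 := by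
  have hd : 0 < b - a := sub_pos.2 hab
  set c := (b - a)⁻¹ * ∫ s in Ioc a b, ‖u s‖ with hc
  have hI : ∫ s in Ioc a b, ‖u s‖ = (b - a) * c := by rw [hc]; field_simp
  have h1 : ‖(b - a)⁻¹ • ∫ s in Ioc a b, u s‖ ≤ c := by
    rw [norm_smul, Real.norm_of_nonneg (inv_nonneg.2 hd.le)]
    exact mul_le_mul_of_nonneg_left (norm_integral_le_integral_norm _) (inv_nonneg.2 hd.le)
  have h2 : 0 ≤ ∫ s in Ioc a b, (‖u s‖ - c) ^ 2 := integral_nonneg fun s => sq_nonneg _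
  have h3 : ∫ s in Ioc a b, (‖u s‖ - c) ^ 2 = (∫ s in Ioc a b, ‖u s‖ ^ 2) - (b - a) * c ^ 2 := by
    have : ∀ s, (‖u s‖ - c) ^ 2 = ‖u s‖ ^ 2 - ((2 * c) * ‖u s‖ - c ^ 2) := fun s => by ring
    simp_rw [this]
    have hn : IntegrableOn (fun s => (2 * c) * ‖u s‖) (Ioc a b) := hu.norm.const_mul _
    have hk : IntegrableOn (fun _ : ℝ => c ^ 2) (Ioc a b) := by simp
    have e1 := integral_sub hu2 (hn.sub hk)
    simp only [Pi.sub_apply] at e1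
    rw [e1, integral_sub hn hk, integral_const_mul, hI]
    simp [max_eq_left hd.le]
    ring
  have h4 : ‖(b - a)⁻¹ • ∫ s in Ioc a b, u s‖ ^ 2 ≤ c ^ 2 := by gcongr
  nlinarith

lemma sq3 {E : Type*} [NormedAddCommGroup E] (a b c : E) :
    ‖a + b + c‖ ^ 2 ≤ 3 * (‖a‖ ^ 2 + ‖b‖ ^ 2 + ‖c‖ ^ 2) := by
  have h : ‖a + b + c‖ ≤ ‖a‖ + ‖b‖ + ‖c‖ := norm_add₃_le
  have : ‖a + b + c‖ ^ 2 ≤ (‖a‖ + ‖b‖ + ‖c‖) ^ 2 := by gcongr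
  nlinarith [sq_nonneg (‖a‖ - ‖b‖), sq_nonneg (‖b‖ - ‖c‖), sq_nonneg (‖a‖ - ‖c‖)]

lemma sq2 {E : Type*} [NormedAddCommGroup E] (a b : E) :
    ‖a + b‖ ^ 2 ≤ 2 * (‖a‖ ^ 2 + ‖b‖ ^ 2) := by
  have h : ‖a + b‖ ≤ ‖a‖ + ‖b‖ := norm_add_le _ _
  have : ‖a + b‖ ^ 2 ≤ (‖a‖ + ‖b‖) ^ 2 := by gcongr
  nlinarith [sq_nonneg (‖a‖ - ‖b‖)]

/-- L2 on `(0, tf]`. -/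
abbrev ML {E : Type*} [NormedAddCommGroup E] (tf : ℝ) (u : ℝ → E) : Prop :=
  MemLp u 2 (volume.restrict (Ioc (0:ℝ) tf))

lemma ML.int {E : Type*} [NormedAddCommGroup E] {tf : ℝ} {u : ℝ → E} (h : ML tf u) :
    IntegrableOn u (Ioc 0 tf) := h.integrable (by norm_num)

lemma ML.sq {E : Type*} [NormedAddCommGroup E] {tf : ℝ} {u : ℝ → E} (h : ML tf u) :
    IntegrableOn (fun s => ‖u s‖ ^ 2) (Ioc 0 tf) := h.norm.integrable_sq

lemma ML.of_cont {E : Type*} [NormedAddCommGroup E] {tf : ℝ} {u : ℝ → E}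
    (h : ContinuousOn u (Icc 0 tf)) : ML tf u := by
  obtain ⟨C, hC⟩ := isCompact_Icc.exists_bound_of_continuousOn h
  refine MemLp.of_bound ((h.mono Ioc_subset_Icc_self).aestronglyMeasurable measurableSet_Ioc) C ?_
  exact (ae_restrict_mem measurableSet_Ioc).mono fun s hs => hC s (Ioc_subset_Icc_self hs)

lemma IsW2.ml {n : ℕ} {tf : ℝ} {x x' : ℝ → Eu n} (h : IsW2 tf x x') : ML tf x' :=
  (memLp_two_iff_integrable_sq_norm (h.1.mono_set Ioc_subset_Icc_self).aestronglyMeasurable).2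
    (h.2.1.mono_set Ioc_subset_Icc_self)

lemma proj_bound {E : Type*} [NormedAddCommGroup E] [NormedSpace ℝ E] [CompleteSpace E] {tf d : ℝ} {N : ℕ}
    {t : ℕ → ℝ} (P : Ptn tf d N t) {u v g : ℝ → E} (hu : ML tf u) (hv : ML tf v)
    (hg : ML tf g) {ω : ℝ} (hω : ∀ s ∈ Icc 0 tf, ∀ s' ∈ Icc 0 tf, |s - s'| ≤ d → ‖g s - g s'‖ ≤ ω) :
    ∑ k ∈ Finset.range N, ∫ s in Ioc (t k) (t (k+1)),
      ‖(t (k+1) - t k)⁻¹ • (∫ r in Ioc (t k) (t (k+1)), v r) - u s‖ ^ 2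
    ≤ 3 * ((∫ s in Ioc 0 tf, ‖v s - g s‖ ^ 2) + tf * ω ^ 2 + ∫ s in Ioc 0 tf, ‖g s - u s‖ ^ 2) := by
  have hvg : ML tf (fun s => v s - g s) := hv.sub hg
  have hgu : ML tf (fun s => g s - u s) := hg.sub hu
  rw [← P.split hvg.sq, ← P.split hgu.sq, ← P.sumδ, Finset.sum_mul, ← Finset.sum_add_distrib,
    ← Finset.sum_add_distrib, Finset.mul_sum]
  refine Finset.sum_le_sum fun k hk => ?_
  have hk := Finset.mem_range.1 hk
  have hlt := P.mono k hk
  have hd : 0 < t (k+1) - t k := sub_pos.2 hlt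
  have hsub := P.sub hk
  set δ := t (k+1) - t k with hδ
  set I := Ioc (t k) (t (k+1)) with hI
  have hvi : IntegrableOn v I := hv.int.mono_set hsub
  have hgi : IntegrableOn g I := hg.int.mono_set hsub
  have hJ := jensen hlt (hvg.int.mono_set hsub) (hvg.sq.mono_set hsub)
  set c := δ⁻¹ • ∫ r in I, (v r - g r) with hc
  have hvol : volume.real I = δ := by simp [hI, hδ, hlt.le]
  have hpt : ∀ s ∈ I, ‖δ⁻¹ • (∫ r in I, v r) - u s‖ ^ 2
      ≤ 3 * (‖c‖ ^ 2 + ω ^ 2) + 3 * ‖g s - u s‖ ^ 2 := by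
    intro s hs
    have e : δ⁻¹ • (∫ r in I, v r) - u s
        = c + (δ⁻¹ • ∫ r in I, (g r - g s)) + (g s - u s) := by
      have hcs : IntegrableOn (fun _ : ℝ => g s) I := by simp [hI]
      rw [hc, integral_sub hvi hgi, integral_sub hgi hcs]
      rw [setIntegral_const, hvol, smul_sub, smul_sub, smul_smul, inv_mul_cancel₀ hd.ne', one_smul]
      abel
    have hb : ‖δ⁻¹ • ∫ r in I, (g r - g s)‖ ≤ ω := by
      rw [norm_smul, Real.norm_of_nonneg (inv_nonneg.2 hd.le)]
      have : ‖∫ r in I, (g r - g s)‖ ≤ ω * volume.real I := by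
        refine norm_setIntegral_le_of_norm_le_const (by simp [hI]) fun r hr => ?_
        refine hω r (Ioc_subset_Icc_self (hsub hr)) s (Ioc_subset_Icc_self (hsub hs)) ?_
        have := P.mesh k hk
        rw [abs_le]; constructor <;> linarith [hr.1, hr.2, hs.1, hs.2]
      rw [hvol] at this
      calc _ ≤ δ⁻¹ * (ω * δ) := by gcongr
        _ = ω := by field_simp
    rw [e]
    have := sq3 c (δ⁻¹ • ∫ r in I, (g r - g s)) (g s - u s)
    have hb2 : ‖δ⁻¹ • ∫ r in I, (g r - g s)‖ ^ 2 ≤ ω ^ 2 := by gcongr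
    linarith
  have hgui := hgu.sq.mono_set hsub
  have hi2 : IntegrableOn (fun s => 3 * (‖c‖ ^ 2 + ω ^ 2) + 3 * ‖g s - u s‖ ^ 2) I :=
    Integrable.add (integrable_const _) (hgui.const_mul 3)
  have hi1 : IntegrableOn (fun s => ‖δ⁻¹ • (∫ r in I, v r) - u s‖ ^ 2) I := by
    have : ML tf (fun s => δ⁻¹ • (∫ r in I, v r) - u s) := (memLp_const _).sub hu
    exact this.sq.mono_set hsub
  calc _ ≤ ∫ s in I, (3 * (‖c‖ ^ 2 + ω ^ 2) + 3 * ‖g s - u s‖ ^ 2) :=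
        setIntegral_mono_on hi1 hi2 measurableSet_Ioc hpt
    _ = δ * (3 * (‖c‖ ^ 2 + ω ^ 2)) + 3 * ∫ s in I, ‖g s - u s‖ ^ 2 := by
        rw [integral_add (integrable_const _) (hgui.const_mul 3), setIntegral_const, hvol,
          integral_const_mul, smul_eq_mul]
    _ ≤ _ := by linarith

lemma proj_tendsto {E : Type*} [NormedAddCommGroup E] [NormedSpace ℝ E] [CompleteSpace E] {tf : ℝ} (htf : 0 < tf)
    {N : ℕ → ℕ} {t : ℕ → ℕ → ℝ} {d : ℕ → ℝ} (P : ∀ i, Ptn tf (d i) (N i) (t i)) {l : Filter ℕ}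
    (hd : Tendsto d l (nhds 0)) {u : ℝ → E} {v : ℕ → ℝ → E} (hu : ML tf u) (hv : ∀ i, ML tf (v i))
    (huv : Tendsto (fun i => ∫ s in Ioc 0 tf, ‖v i s - u s‖ ^ 2) l (nhds 0)) :
    Tendsto (fun i => ∑ k ∈ Finset.range (N i), ∫ s in Ioc (t i k) (t i (k+1)),
      ‖(t i (k+1) - t i k)⁻¹ • (∫ r in Ioc (t i k) (t i (k+1)), v i r) - u s‖ ^ 2) l (nhds 0) := by
  rw [Metric.tendsto_nhds]
  intro ε hε
  have hu' : MemLp u (ENNReal.ofReal 2) (volume.restrict (Ioc (0:ℝ) tf)) := by simpa using hu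
  obtain ⟨g, hg, hgm⟩ := hu'.exists_boundedContinuous_integral_rpow_sub_le (by norm_num)
    (show 0 < ε / 20 by positivity)
  have hgm : ML tf g := by simpa using hgm
  have hg1 : ∫ s in Ioc 0 tf, ‖u s - g s‖ ^ 2 ≤ ε / 20 := by simpa using hg
  have hg2 : ∫ s in Ioc 0 tf, ‖g s - u s‖ ^ 2 ≤ ε / 20 := by
    simpa [norm_sub_rev] using hg1
  obtain ⟨ω, hω, hωε⟩ : ∃ ω > 0, tf * ω ^ 2 < ε / 20 := by
    refine ⟨Real.sqrt (ε / (40 * tf)), by positivity, ?_⟩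
    rw [Real.sq_sqrt (by positivity)]
    field_simp
    norm_num
  have huc := isCompact_Icc.uniformContinuousOn_of_continuous (s := Icc (0:ℝ) tf) g.continuous.continuousOn
  rw [Metric.uniformContinuousOn_iff] at huc
  obtain ⟨r, hr, hrg⟩ := huc ω hω
  filter_upwards [hd.eventually (gt_mem_nhds hr), huv.eventually (gt_mem_nhds (show 0 < ε / 20 by positivity))]
    with i hi1 hi2
  have hb := proj_bound (P i) hu (hv i) hgm (ω := ω) (fun s hs s' hs' h => by
    rw [← dist_eq_norm]; exact (hrg s hs s' hs' (by rw [Real.dist_eq]; linarith)).le)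
  have hvu : ML tf (fun s => v i s - u s) := (hv i).sub hu
  have hug : ML tf (fun s => u s - g s) := hu.sub hgm
  have hvg : ML tf (fun s => v i s - g s) := (hv i).sub hgm
  have h2 : ∫ s in Ioc 0 tf, ‖v i s - g s‖ ^ 2
      ≤ 2 * ((∫ s in Ioc 0 tf, ‖v i s - u s‖ ^ 2) + ∫ s in Ioc 0 tf, ‖u s - g s‖ ^ 2) := by
    rw [← integral_add hvu.sq hug.sq, ← integral_const_mul]
    refine integral_mono hvg.sq ((hvu.sq.add hug.sq).const_mul 2) fun s => ?_
    have := sq2 (v i s - u s) (u s - g s)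
    simpa using this
  rw [Real.dist_eq, sub_zero, abs_of_nonneg]
  · linarith
  · exact Finset.sum_nonneg fun k _ => integral_nonneg fun s => sq_nonneg _


lemma elog_eq (r : ℝ) : elog r = ENNReal.log (ENNReal.ofReal r) := by
  rw [ENNReal.log_ofReal]; rfl

lemma elog_cont : Continuous elog := by
  have : elog = fun r => ENNReal.log (ENNReal.ofReal r) := funext elog_eq
  rw [this]
  exact ENNReal.continuous_log.comp ENNReal.continuous_ofReal

lemma elog_ne_top (r : ℝ) : elog r ≠ ⊤ := by
  unfold elog; split_ifs <;> simp

lemma elog_pos {r : ℝ} (h : 0 < r) : elog r = (Real.log r : ℝ) := by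
  unfold elog; rw [if_neg (not_le.2 h)]

lemma det_deriv (n : ℕ) : ∃ D' : (Eu n →L[ℝ] Eu n) →L[ℝ] ℝ,
    HasFDerivAt (fun A : Eu n →L[ℝ] Eu n =>
      LinearMap.det (ContinuousLinearMap.toLinearMap ((1 : Eu n →L[ℝ] Eu n) + A))) D' 0 ∧
    ∀ A, D' A = LinearMap.trace ℝ (Eu n) (ContinuousLinearMap.toLinearMap A) := by
  let b := (EuclideanSpace.basisFun (Fin n) ℝ).toBasis
  let T : (Eu n →L[ℝ] Eu n) →ₗ[ℝ] Matrix (Fin n) (Fin n) ℝ :=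
    (LinearMap.toMatrix b b).toLinearMap ∘ₗ (ContinuousLinearMap.coeLM ℝ)
  have hT : ∀ A : Eu n →L[ℝ] Eu n, LinearMap.toMatrix b b (A : Eu n →ₗ[ℝ] Eu n) = T A := fun A => rfl
  have hdet : ∀ A : Eu n →L[ℝ] Eu n,
      LinearMap.det (ContinuousLinearMap.toLinearMap ((1 : Eu n →L[ℝ] Eu n) + A)) = (1 + T A).det := by
    intro A
    rw [← LinearMap.det_toMatrix b, hT, map_add]
    congr 2
    rw [← hT]
    exact LinearMap.toMatrix_one b
  have htr : ∀ A : Eu n →L[ℝ] Eu n,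
      LinearMap.trace ℝ (Eu n) (ContinuousLinearMap.toLinearMap A) = (T A).trace := by
    intro A
    rw [LinearMap.trace_eq_matrix_trace ℝ b, hT]
  have hdiff : Differentiable ℝ (fun A : Eu n →L[ℝ] Eu n =>
      LinearMap.det (ContinuousLinearMap.toLinearMap ((1 : Eu n →L[ℝ] Eu n) + A))) := by
    simp_rw [hdet, Matrix.det_apply]
    have hent : ∀ i j, Differentiable ℝ (fun A : Eu n →L[ℝ] Eu n => (1 + T A) i j) := by
      intro i j
      have : Differentiable ℝ (fun A : Eu n →L[ℝ] Eu n => (T A) i j) := by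
        let e : (Eu n →L[ℝ] Eu n) →ₗ[ℝ] ℝ :=
          { toFun := fun A => T A i j, map_add' := fun A B => by simp, map_smul' := fun c A => by simp }
        exact (LinearMap.toContinuousLinearMap e).differentiable
      simpa [Matrix.add_apply] using this.const_add ((1 : Matrix (Fin n) (Fin n) ℝ) i j)
    refine Differentiable.fun_sum fun σ _ => ?_
    refine Differentiable.const_smul ?_ _
    exact fun A => (HasFDerivAt.finsetProd (u := Finset.univ) (g := fun (i : Fin n) (A : Eu n →L[ℝ] Eu n) => (1 + T A) (σ i) i) (fun i _ => (hent _ _ A).hasFDerivAt)).differentiableAt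
  refine ⟨_, (hdiff 0).hasFDerivAt, fun A => ?_⟩
  have hline : HasDerivAt (fun r : ℝ => r • A) A 0 := by
    simpa using (hasDerivAt_id (0:ℝ)).smul_const A
  have h0 : HasFDerivAt (fun A : Eu n →L[ℝ] Eu n =>
      LinearMap.det (ContinuousLinearMap.toLinearMap ((1 : Eu n →L[ℝ] Eu n) + A)))
      (fderiv ℝ (fun A : Eu n →L[ℝ] Eu n =>
      LinearMap.det (ContinuousLinearMap.toLinearMap ((1 : Eu n →L[ℝ] Eu n) + A))) 0) ((0:ℝ) • A) := by
    have e : (0:ℝ) • A = 0 := zero_smul ℝ A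
    rw [e]; exact (hdiff 0).hasFDerivAt
  have h1 := h0.comp_hasDerivAt (0:ℝ) hline
  have h2 : ∀ r : ℝ, LinearMap.det (ContinuousLinearMap.toLinearMap ((1 : Eu n →L[ℝ] Eu n) + r • A))
      = (Matrix.det (1 + (Polynomial.X : Polynomial ℝ) • (T A).map Polynomial.C)).eval r := by
    intro r
    rw [hdet, ← Polynomial.coe_evalRingHom, RingHom.map_det]
    congr 1
    ext i j
    simp [Matrix.add_apply, Matrix.one_apply, apply_ite (Polynomial.eval r)]
    try ring
  have h3 := (Matrix.det (1 + (Polynomial.X : Polynomial ℝ) • (T A).map Polynomial.C)).hasDerivAt 0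
  rw [Matrix.derivative_det_one_add_X_smul] at h3
  rw [htr]
  refine HasDerivAt.unique h1 (h3.congr_of_eventuallyEq ?_)
  exact Eventually.of_forall fun r => h2 r

lemma logdet (n : ℕ) : ∀ η > (0:ℝ), ∃ r > (0:ℝ), ∀ A : Eu n →L[ℝ] Eu n, ‖A‖ < r →
    0 < LinearMap.det (ContinuousLinearMap.toLinearMap ((1 : Eu n →L[ℝ] Eu n) + A)) ∧
    |Real.log (LinearMap.det (ContinuousLinearMap.toLinearMap ((1 : Eu n →L[ℝ] Eu n) + A)))
      - LinearMap.trace ℝ (Eu n) (ContinuousLinearMap.toLinearMap A)| ≤ η * ‖A‖ := by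
  intro η hη
  obtain ⟨D', hD, htr⟩ := det_deriv n
  have h1 : LinearMap.det (ContinuousLinearMap.toLinearMap ((1 : Eu n →L[ℝ] Eu n) + 0)) = 1 := by
    rw [add_zero]; exact LinearMap.det_id
  have hpos := hD.continuousAt.eventually (lt_mem_nhds (show (0:ℝ) < LinearMap.det (ContinuousLinearMap.toLinearMap ((1 : Eu n →L[ℝ] Eu n) + 0)) by rw [h1]; norm_num))
  have hlog := hD.log (by rw [h1]; norm_num)
  rw [h1, inv_one, one_smul] at hlog
  have hlo := hlog.isLittleO.def hη
  obtain ⟨r, hr, H⟩ := Metric.eventually_nhds_iff.1 (hpos.and hlo)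
  refine ⟨r, hr, fun A hA => ?_⟩
  obtain ⟨ha, hb⟩ := H (y := A) (by simpa using hA)
  refine ⟨ha, ?_⟩
  simp only [h1, Real.log_one, sub_zero, htr, Real.norm_eq_abs] at hb
  exact hb


def UConv {n : ℕ} (l : Filter ℕ) (tf : ℝ) (xi : ℕ → ℝ → Eu n) (x : ℝ → Eu n) : Prop :=
  ∀ ε > (0:ℝ), ∀ᶠ i in l, ∀ s ∈ Icc (0:ℝ) tf, ‖xi i s - x s‖ < ε

lemma gron {tf d : ℝ} {N : ℕ} {t : ℕ → ℝ} (P : Ptn tf d N t) {e : ℕ → ℝ} {L η : ℝ} (hL : 0 ≤ L)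
    (hη : 0 ≤ η) (he : ∀ k, 0 ≤ e k) (hdL : L * d ≤ 1)
    (hs : ∀ k < N, e (k+1) ≤ e k + (t (k+1) - t k) * (L / 2 * (e k + e (k+1)) + η)) :
    ∀ k ≤ N, e k ≤ Real.exp (2 * L * t k) * (e 0 + 2 * η * t k) := by
  intro k
  induction k with
  | zero => intro _; simp [P.h0]
  | succ k ih =>
    intro hk
    have ih := ih (by omega)
    have hk : k < N := hk
    have h1 := hs k hk
    have hδ : 0 < t (k+1) - t k := sub_pos.2 (P.mono k hk)
    have hm := P.mesh k hk
    have ht := (P.mem hk.le).1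
    have ht1 := (P.mem (show k+1 ≤ N from hk)).1
    set δ := t (k+1) - t k with hδd
    have ea : t (k+1) = t k + δ := by rw [hδd]; ring
    have hLδ : L * δ ≤ 1 := (mul_le_mul_of_nonneg_left hm hL).trans hdL
    have hLδ0 : 0 ≤ L * δ := by positivity
    have hexp := Real.add_one_le_exp (2 * L * δ)
    have key : e (k+1) ≤ Real.exp (2 * L * δ) * e k + 2 * δ * η := by
      have h2 : (1 - L * δ / 2) * e (k+1) ≤ (1 + L * δ / 2) * e k + δ * η := by linarith
      have h3 : (1 + L * δ / 2) * e k ≤ (1 - L * δ / 2) * (Real.exp (2 * L * δ) * e k) := by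
        rw [← mul_assoc]
        refine mul_le_mul_of_nonneg_right ?_ (he k)
        nlinarith
      have h4 : δ * η ≤ (1 - L * δ / 2) * (2 * δ * η) := by
        have : 0 ≤ δ * η := by positivity
        nlinarith
      have h5 : (1 - L * δ / 2) * e (k+1)
          ≤ (1 - L * δ / 2) * (Real.exp (2 * L * δ) * e k + 2 * δ * η) := by linarith
      exact le_of_mul_le_mul_left h5 (by linarith)
    have h6 : Real.exp (2 * L * δ) * e k
        ≤ Real.exp (2 * L * t (k+1)) * (e 0 + 2 * η * t k) := by
      rw [ea, show 2 * L * (t k + δ) = 2 * L * δ + 2 * L * t k by ring, Real.exp_add, mul_assoc (Real.exp _)]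
      exact mul_le_mul_of_nonneg_left ih (Real.exp_pos _).le
    have h7 : 2 * δ * η ≤ Real.exp (2 * L * t (k+1)) * (2 * η * δ) := by
      have : 1 ≤ Real.exp (2 * L * t (k+1)) := Real.one_le_exp (by positivity)
      have h8 : 0 ≤ 2 * η * δ := by positivity
      nlinarith
    calc _ ≤ _ := key
      _ ≤ Real.exp (2 * L * t (k+1)) * (e 0 + 2 * η * t k) + Real.exp (2 * L * t (k+1)) * (2 * η * δ) := by
        linarith
      _ = _ := by rw [ea]; ring

lemma z_bound {E : Type*} [NormedAddCommGroup E] [NormedSpace ℝ E] [CompleteSpace E] {tf d : ℝ} {N : ℕ}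
    {t : ℕ → ℝ} (P : Ptn tf d N t) {L η : ℝ} (hL : 0 ≤ L) (hη : 0 ≤ η) (hdL : L * d ≤ 1)
    (htf : 0 ≤ tf) (hd1 : d ≤ 1)
    {zh z F : ℝ → E} {c : ℕ → E} {z0 : E} (hF : IntegrableOn F (Ioc 0 tf))
    (hz : ∀ s ∈ Icc (0:ℝ) tf, z s = z0 + ∫ r in Ioc (0:ℝ) s, F r)
    (hzh : ∀ k < N, ∀ s ∈ Ioc (t k) (t (k+1)), zh s = zh (t k) + (s - t k) • c k)
    (H : ∀ k < N, ∀ s ∈ Ioc (t k) (t (k+1)), ‖c k - F s‖ ≤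
      L / 2 * (‖zh (t k) - z (t k)‖ + ‖zh (t (k+1)) - z (t (k+1))‖) + η) :
    ∀ s ∈ Icc (0:ℝ) tf, ‖zh s - z s‖ ≤ 2 * (Real.exp (2 * L * tf) * (‖zh 0 - z 0‖ + 2 * η * tf)) + η := by
  have hstep : ∀ k < N, ∀ s ∈ Ioc (t k) (t (k+1)), ‖zh s - z s‖ ≤ ‖zh (t k) - z (t k)‖ +
      (s - t k) * (L / 2 * (‖zh (t k) - z (t k)‖ + ‖zh (t (k+1)) - z (t (k+1))‖) + η) := by
    intro k hk s hs
    have hsm : s ∈ Icc 0 tf := Ioc_subset_Icc_self (P.sub hk hs)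
    have hsub : Ioc (t k) s ⊆ Ioc (t k) (t (k+1)) := Ioc_subset_Ioc_right hs.2
    have hFi : IntegrableOn F (Ioc (t k) s) := hF.mono_set (hsub.trans (P.sub hk))
    have hvol : volume.real (Ioc (t k) s) = s - t k := by simp [hs.1.le]
    have e1 : z s = z (t k) + ∫ r in Ioc (t k) s, F r := by
      rw [hz s hsm, hz _ (P.mem hk.le), ← Ioc_union_Ioc_eq_Ioc (P.mem hk.le).1 hs.1.le,
        setIntegral_union (Ioc_disjoint_Ioc_of_le le_rfl) measurableSet_Ioc
        (hF.mono_set (Ioc_subset_Ioc_right (P.mem hk.le).2)) hFi, add_assoc]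
    have e2 : zh s - z s = (zh (t k) - z (t k)) + ∫ r in Ioc (t k) s, (c k - F r) := by
      rw [integral_sub (integrable_const _) hFi, setIntegral_const, hvol, hzh k hk s hs, e1]
      abel
    rw [e2]
    refine (norm_add_le _ _).trans (add_le_add le_rfl ?_)
    have := norm_setIntegral_le_of_norm_le_const (μ := volume) (s := Ioc (t k) s) (by simp)
      fun r hr => H k hk r (hsub hr)
    rw [hvol] at this
    linarith
  have hg := gron P (e := fun k => ‖zh (t k) - z (t k)‖) hL hη (fun k => norm_nonneg _) hdL
    (fun k hk => hstep k hk _ ⟨P.mono k hk, le_rfl⟩)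
  simp only [P.h0] at hg
  set K := Real.exp (2 * L * tf) * (‖zh 0 - z 0‖ + 2 * η * tf) with hK
  have hK0 : 0 ≤ K := by positivity
  have hgK : ∀ k ≤ N, ‖zh (t k) - z (t k)‖ ≤ K := by
    intro k hk
    refine (hg k hk).trans ?_
    have := P.mem hk
    have h2 := this.2
    have h1 := this.1
    rw [hK]
    gcongr
  intro s hs
  rcases hs.1.eq_or_lt with h0 | h0
  · have := hgK 0 (Nat.zero_le _)
    rw [P.h0] at this
    rw [← h0]; linarith
  obtain ⟨k, hk, hsk⟩ := P.cover ⟨h0, hs.2⟩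
  have h1 := hstep k hk s hsk
  have h2 := hgK k hk.le
  have h3 := hgK (k+1) hk
  have h4 : s - t k ≤ d := by linarith [P.mesh k hk, hsk.2]
  have h5 : 0 ≤ s - t k := by linarith [hsk.1]
  have h6 : L / 2 * (‖zh (t k) - z (t k)‖ + ‖zh (t (k+1)) - z (t (k+1))‖) + η ≤ L * K + η := by
    nlinarith
  have h7 : (s - t k) * (L / 2 * (‖zh (t k) - z (t k)‖ + ‖zh (t (k+1)) - z (t (k+1))‖) + η)
      ≤ d * (L * K + η) := by
    refine (mul_le_mul_of_nonneg_left h6 h5).trans (mul_le_mul_of_nonneg_right h4 (by positivity))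
  nlinarith

lemma approx {n q m : ℕ} {E : Type*} [NormedAddCommGroup E] {tf : ℝ}
    {F : ℝ → Eu n → Eu q → Eu m → E}
    (hF : Continuous fun p : ℝ × Eu n × Eu q × Eu m => F p.1 p.2.1 p.2.2.1 p.2.2.2)
    {x : ℝ → Eu n} {z : ℝ → Eu q} (hx : ContinuousOn x (Icc 0 tf)) (hz : ContinuousOn z (Icc 0 tf))
    (θ : Eu m) : ∀ ε > (0:ℝ), ∃ r > (0:ℝ), ∀ s ∈ Icc (0:ℝ) tf, ∀ s' ∈ Icc (0:ℝ) tf, ∀ a b c,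
      |s' - s| < r → ‖a - x s'‖ < r → ‖b - z s'‖ < r → ‖c - θ‖ < r →
      ‖F s' a b c - F s (x s) (z s) θ‖ < ε := by
  intro ε hε
  have hcurve : ContinuousOn (fun s => (s, x s, z s, θ)) (Icc 0 tf) :=
    continuousOn_id.prodMk (hx.prodMk (hz.prodMk continuousOn_const))
  have hcomp : ContinuousOn (fun s => F s (x s) (z s) θ) (Icc 0 tf) :=
    hF.comp_continuousOn hcurve
  have huc := Metric.uniformContinuousOn_iff.1 (isCompact_Icc.uniformContinuousOn_of_continuous hcomp)
    (ε/2) (by positivity)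
  obtain ⟨r1, hr1, H1⟩ := huc
  have hc := (isCompact_Icc.image_of_continuousOn hcurve).uniformContinuousAt_of_continuousAt _
    (fun a _ => hF.continuousAt) (Metric.dist_mem_uniformity (show 0 < ε/2 by positivity))
  obtain ⟨r2, hr2, H2⟩ := Metric.mem_uniformity_dist.1 hc
  refine ⟨min r1 r2, lt_min hr1 hr2, fun s hs s' hs' a b c h1 h2 h3 h4 => ?_⟩
  have A := H1 s' hs' s hs (by rw [Real.dist_eq]; exact h1.trans_le (min_le_left _ _))
  have B := H2 (a := (s', x s', z s', θ)) (b := (s', a, b, c)) (by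
    rw [dist_comm]
    simp only [Prod.dist_eq, dist_self]
    rw [dist_eq_norm a, dist_eq_norm b, dist_eq_norm c]
    have := min_le_right r1 r2
    refine max_lt hr2 (max_lt ?_ (max_lt ?_ ?_)) <;> linarith) (mem_image_of_mem _ hs')
  simp only [mem_ofPred_eq] at B
  rw [← dist_eq_norm]
  rw [dist_comm] at B
  linarith [dist_triangle (F s' a b c) (F s' (x s') (z s') θ) (F s (x s) (z s) θ)]

lemma z_tendsto {n q m : ℕ} {tf : ℝ} (htf : 0 < tf)
    {N : ℕ → ℕ} {t : ℕ → ℕ → ℝ} {d : ℕ → ℝ} (P : ∀ i, Ptn tf (d i) (N i) (t i)) {l : Filter ℕ}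
    (hd : Tendsto d l (nhds 0)) {S : Set (Eu m)} {h : ℝ → Eu n → Eu q → Eu m → Eu q}
    (hhc : Continuous fun p : ℝ × Eu n × Eu q × Eu m => h p.1 p.2.1 p.2.2.1 p.2.2.2)
    {L : ℝ} (hL : 0 < L) (hLip : ∀ θ ∈ S, ∀ t ∈ Icc (0:ℝ) tf, ∀ (a a' : Eu n) (b b' : Eu q),
      ‖h t a b θ - h t a' b' θ‖ ≤ L * (‖a - a'‖ + ‖b - b'‖))
    {xi : ℕ → ℝ → Eu n} {x : ℝ → Eu n} (hx : ContinuousOn x (Icc 0 tf)) (hxi : UConv l tf xi x)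
    {ζi : ℕ → Eu q} {z0 : Eu q} {ϑi : ℕ → Eu m} {θ : Eu m}
    (hζ : Tendsto (fun i => ‖ζi i - z0‖) l (nhds 0)) (hϑ : Tendsto (fun i => ‖ϑi i - θ‖) l (nhds 0))
    {zi : ℕ → ℝ → Eu q} {z : ℝ → Eu q} (hz : ContinuousOn z (Icc 0 tf))
    (hzI : ∀ t ∈ Icc (0:ℝ) tf, z t = z0 + ∫ s in Ioc (0:ℝ) t, h s (x s) (z s) θ)
    (hzi : ∀ᶠ i in l, ϑi i ∈ S ∧ IsTrapPath (N i) (t i) h (xi i) (ζi i) (ϑi i) (zi i)) :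
    UConv l tf zi z := by
  intro ε hε
  set K := Real.exp (2 * L * tf) with hK
  have hKp : 0 < K := Real.exp_pos _
  set η := ε / (4 * (K * (1 + 2 * tf) + 1)) with hηd
  have hη : 0 < η := by positivity
  obtain ⟨r, hr, H⟩ := approx hhc hx hz θ η hη
  have hcomp : ContinuousOn (fun s => h s (x s) (z s) θ) (Icc 0 tf) :=
    hhc.comp_continuousOn (f := fun s => (s, x s, z s, θ))
      (continuousOn_id.prodMk (hx.prodMk (hz.prodMk continuousOn_const)))
  have hz00 : z 0 = z0 := by simpa using hzI 0 ⟨le_rfl, htf.le⟩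
  filter_upwards [hd.eventually (gt_mem_nhds hr), hd.eventually (gt_mem_nhds one_pos),
    hd.eventually (gt_mem_nhds (show 0 < 1 / L by positivity)), hxi r hr, hϑ.eventually (gt_mem_nhds hr),
    hζ.eventually (gt_mem_nhds hη), hzi] with i hi1 hi2 hi3 hi4 hi5 hi6 ⟨hS, hz1, hz2⟩ s hs
  have hdL : L * d i ≤ 1 := by
    rw [lt_div_iff₀ hL] at hi3; linarith
  have hb := z_bound (P i) hL.le hη.le hdL htf.le hi2.le (ML.of_cont hcomp).int hzI
    (zh := zi i) (c := fun k => (1/2:ℝ) • (h (t i k) (xi i (t i k)) (zi i (t i k)) (ϑi i) +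
       h (t i (k + 1)) (xi i (t i (k + 1))) (zi i (t i (k + 1))) (ϑi i)))
    (fun k hk s hs => by rw [hz2 k hk s hs, smul_smul]; congr 2; ring)
    (fun k hk s hs => by
      have hsm : s ∈ Icc 0 tf := Ioc_subset_Icc_self ((P i).sub hk hs)
      have hm := (P i).mesh k hk
      have A : ∀ j ≤ N i, |t i j - s| < r →
          ‖h (t i j) (xi i (t i j)) (zi i (t i j)) (ϑi i) - h s (x s) (z s) θ‖
            ≤ L * ‖zi i (t i j) - z (t i j)‖ + η := by
        intro j hj hjs
        have hmem := (P i).mem hj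
        have h1 := hLip _ hS _ hmem (xi i (t i j)) (xi i (t i j)) (zi i (t i j)) (z (t i j))
        have h2 := H s hsm _ hmem (xi i (t i j)) (z (t i j)) (ϑi i) hjs (hi4 _ hmem) (by simpa using hr) hi5
        rw [sub_self, norm_zero, zero_add] at h1
        have := norm_sub_le_norm_sub_add_norm_sub (h (t i j) (xi i (t i j)) (zi i (t i j)) (ϑi i))
          (h (t i j) (xi i (t i j)) (z (t i j)) (ϑi i)) (h s (x s) (z s) θ)
        linarith
      have A1 := A k hk.le (by rw [abs_lt]; constructor <;> linarith [hs.1, hs.2])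
      have A2 := A (k+1) hk (by rw [abs_lt]; constructor <;> linarith [hs.1, hs.2])
      set p := h (t i k) (xi i (t i k)) (zi i (t i k)) (ϑi i)
      set p' := h (t i (k+1)) (xi i (t i (k+1))) (zi i (t i (k+1))) (ϑi i)
      set w := h s (x s) (z s) θ
      have e : (1/2:ℝ) • (p + p') - w = (1/2:ℝ) • ((p - w) + (p' - w)) := by
        have : w = (1/2:ℝ) • (w + w) := by rw [← two_smul ℝ w, smul_smul]; norm_num
        conv_lhs => rw [this]
        rw [← smul_sub]; congr 1; abel
      have e2 := norm_add_le (p - w) (p' - w)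
      change ‖(1/2:ℝ) • (p + p') - w‖ ≤ _
      rw [e, norm_smul, Real.norm_of_nonneg (by norm_num)]
      linarith) s hs
  rw [hz1, hz00] at hb
  have h1 : 2 * (K * (‖ζi i - z0‖ + 2 * η * tf)) + η ≤ 2 * (K * (η + 2 * η * tf)) + 2 * η := by
    have : K * (‖ζi i - z0‖ + 2 * η * tf) ≤ K * (η + 2 * η * tf) := by gcongr
    linarith
  have h2 : 2 * (K * (η + 2 * η * tf)) + 2 * η = ε / 2 := by
    rw [hηd]; field_simp; ring
  linarith

lemma trap_cont {n q m : ℕ} {tf d : ℝ} {N : ℕ} {t : ℕ → ℝ} (P : Ptn tf d N t)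
    {h : ℝ → Eu n → Eu q → Eu m → Eu q} {xh : ℝ → Eu n} {ζ : Eu q} {ϑ : Eu m} {zh : ℝ → Eu q}
    (H : IsTrapPath N t h xh ζ ϑ zh) : ContinuousOn zh (Icc 0 tf) := by
  have : ∀ k ≤ N, ContinuousOn zh (Icc 0 (t k)) := by
    intro k
    induction k with
    | zero => intro _; rw [P.h0, Icc_self]; exact continuousOn_singleton _ _
    | succ k ih =>
      intro hk
      rw [← Icc_union_Icc_eq_Icc (P.mem (show k ≤ N by omega)).1 (P.mono k hk).le]
      refine (ih (by omega)).union_of_isClosed ?_ isClosed_Icc isClosed_Icc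
      have hc : ContinuousOn (fun s => zh (t k) + ((s - t k) / 2) •
        (h (t k) (xh (t k)) (zh (t k)) ϑ + h (t (k + 1)) (xh (t (k + 1))) (zh (t (k + 1))) ϑ))
        (Icc (t k) (t (k+1))) := by fun_prop
      refine hc.congr fun s hs => ?_
      rcases hs.1.eq_or_lt with h0 | h0
      · simp [← h0]
      · exact H.2 k hk s ⟨h0, hs.2⟩
  simpa [P.hN] using this N le_rfl


lemma IsW2.cont {n : ℕ} {tf : ℝ} {x x' : ℝ → Eu n} (h : IsW2 tf x x') : ContinuousOn x (Icc 0 tf) :=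
  (continuousOn_const.add (intervalIntegral.continuousOn_primitive h.1)).congr h.2.2

lemma IsW2.incr {n : ℕ} {tf : ℝ} {x x' : ℝ → Eu n} (h : IsW2 tf x x') {a b : ℝ} (ha : 0 ≤ a)
    (hab : a ≤ b) (hb : b ≤ tf) : x b - x a = ∫ s in Ioc a b, x' s := by
  have hi := h.1.mono_set (Ioc_subset_Icc_self (a := 0) (b := tf))
  rw [h.2.2 b ⟨ha.trans hab, hb⟩, h.2.2 a ⟨ha, hab.trans hb⟩, ← Ioc_union_Ioc_eq_Ioc ha hab,
    setIntegral_union (Ioc_disjoint_Ioc_of_le le_rfl) measurableSet_Ioc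
    (hi.mono_set (Ioc_subset_Ioc_right (hab.trans hb))) (hi.mono_set (Ioc_subset_Ioc ha hb))]
  abel

lemma W2_sup {n : ℕ} {tf : ℝ} (htf : 0 < tf) {x x' y y' : ℝ → Eu n} (hx : IsW2 tf x x')
    (hy : IsW2 tf y y') : ∀ s ∈ Icc 0 tf, ‖x s - y s‖ ≤ (1 + Real.sqrt tf) * W2dist tf x x' y y' := by
  intro s hs
  have hxy : ML tf (fun s => x' s - y' s) := hx.ml.sub hy.ml
  have hI0 : 0 ≤ ∫ s in Ioc (0:ℝ) tf, ‖x' s - y' s‖ ^ 2 := integral_nonneg fun s => sq_nonneg _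
  have h1 : ‖x 0 - y 0‖ ≤ W2dist tf x x' y y' := Real.le_sqrt_of_sq_le (by linarith)
  have hJ := jensen htf (u := fun s => ‖x' s - y' s‖) hxy.int.norm (by simpa using hxy.sq)
  have hn0 : 0 ≤ ∫ s in Ioc (0:ℝ) tf, ‖x' s - y' s‖ := integral_nonneg fun s => norm_nonneg _
  have h2 : ∫ s in Ioc (0:ℝ) tf, ‖x' s - y' s‖ ≤ Real.sqrt tf * W2dist tf x x' y y' := by
    unfold W2dist
    rw [← Real.sqrt_mul htf.le]
    refine Real.le_sqrt_of_sq_le ?_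
    simp only [sub_zero, norm_smul, Real.norm_eq_abs, abs_norm, abs_inv, abs_of_pos htf, abs_of_nonneg hn0] at hJ
    have e : tf * (tf⁻¹ * ∫ s in Ioc (0:ℝ) tf, ‖x' s - y' s‖) ^ 2
      = tf⁻¹ * (∫ s in Ioc (0:ℝ) tf, ‖x' s - y' s‖) ^ 2 := by field_simp
    rw [e, inv_mul_le_iff₀ htf] at hJ
    nlinarith [sq_nonneg ‖x 0 - y 0‖]
  have e : x s - y s = (x 0 - y 0) + ∫ r in Ioc (0:ℝ) s, (x' r - y' r) := by
    rw [integral_sub (hx.ml.int.mono_set (Ioc_subset_Ioc_right hs.2))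
      (hy.ml.int.mono_set (Ioc_subset_Ioc_right hs.2)), hx.2.2 s hs, hy.2.2 s hs]
    abel
  have h3 : ‖∫ r in Ioc (0:ℝ) s, (x' r - y' r)‖ ≤ ∫ s in Ioc (0:ℝ) tf, ‖x' s - y' s‖ :=
    (norm_integral_le_integral_norm _).trans (setIntegral_mono_set hxy.int.norm
      (Eventually.of_forall fun _ => norm_nonneg _) (Ioc_subset_Ioc_right hs.2).eventuallyLE)
  rw [e]
  linarith [norm_add_le (x 0 - y 0) (∫ r in Ioc (0:ℝ) s, (x' r - y' r))]

lemma W2_conv {n : ℕ} {tf : ℝ} (htf : 0 < tf) {l : Filter ℕ} {xi x'i : ℕ → ℝ → Eu n} {x x' : ℝ → Eu n}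
    (hxi : ∀ i, IsW2 tf (xi i) (x'i i)) (hx : IsW2 tf x x')
    (hW : Tendsto (fun i => W2dist tf (xi i) (x'i i) x x') l (nhds 0)) :
    UConv l tf xi x ∧ Tendsto (fun i => ∫ s in Ioc 0 tf, ‖x'i i s - x' s‖ ^ 2) l (nhds 0) := by
  constructor
  · intro ε hε
    have := hW.const_mul (1 + Real.sqrt tf)
    rw [mul_zero] at this
    filter_upwards [this.eventually (gt_mem_nhds hε)] with i hi s hs
    exact (W2_sup htf (hxi i) hx s hs).trans_lt hi
  · have h2 := hW.pow 2
    rw [zero_pow two_ne_zero] at h2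
    refine squeeze_zero (fun i => integral_nonneg fun s => sq_nonneg _) (fun i => ?_) h2
    have hI0 : 0 ≤ ∫ s in Ioc (0:ℝ) tf, ‖x'i i s - x' s‖ ^ 2 := integral_nonneg fun s => sq_nonneg _
    unfold W2dist
    rw [Real.sq_sqrt (by positivity)]
    linarith [sq_nonneg ‖xi i 0 - x 0‖]

lemma sumsq_tendsto {E : Type*} [NormedAddCommGroup E] {tf : ℝ}
    {N : ℕ → ℕ} {t : ℕ → ℕ → ℝ} {d : ℕ → ℝ} (P : ∀ i, Ptn tf (d i) (N i) (t i)) {l : Filter ℕ}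
    {V : ℕ → ℕ → E} {w : ℝ → E} (hw : ML tf w)
    (hD : Tendsto (fun i => ∑ k ∈ Finset.range (N i), ∫ s in Ioc (t i k) (t i (k+1)), ‖V i k + w s‖ ^ 2)
      l (nhds 0)) :
    Tendsto (fun i => ∑ k ∈ Finset.range (N i), (t i (k+1) - t i k) * ‖V i k‖ ^ 2) l
      (nhds (∫ s in Ioc 0 tf, ‖w s‖ ^ 2)) := by
  set W := ∫ s in Ioc 0 tf, ‖w s‖ ^ 2 with hW
  have hW0 : 0 ≤ W := integral_nonneg fun s => sq_nonneg _
  have hb : ∀ κ > (0:ℝ), ∀ i, |∑ k ∈ Finset.range (N i), (t i (k+1) - t i k) * ‖V i k‖ ^ 2 - W|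
      ≤ κ * W + (1 + 1/κ) * ∑ k ∈ Finset.range (N i), ∫ s in Ioc (t i k) (t i (k+1)), ‖V i k + w s‖ ^ 2 := by
    intro κ hκ i
    rw [hW, ← (P i).split hw.sq, ← Finset.sum_sub_distrib, Finset.mul_sum, Finset.mul_sum,
      ← Finset.sum_add_distrib]
    refine (Finset.abs_sum_le_sum_abs _ _).trans (Finset.sum_le_sum fun k hk => ?_)
    have hk := Finset.mem_range.1 hk
    have hlt := (P i).mono k hk
    have hsub := (P i).sub hk
    set I := Ioc (t i k) (t i (k+1)) with hI
    have hvol : volume.real I = t i (k+1) - t i k := by simp [hI, hlt.le]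
    have hVw : ML tf (fun s => V i k + w s) := MemLp.add (f := fun _ => V i k) (g := w) (memLp_const (V i k)) hw
    have i1 : IntegrableOn (fun s => ‖w s‖ ^ 2) I := hw.sq.mono_set hsub
    have i2 : IntegrableOn (fun s => ‖V i k + w s‖ ^ 2) I := hVw.sq.mono_set hsub
    have i3 : IntegrableOn (fun _ : ℝ => ‖V i k‖ ^ 2) I := integrable_const _
    have e : (t i (k+1) - t i k) * ‖V i k‖ ^ 2 - ∫ s in I, ‖w s‖ ^ 2
        = ∫ s in I, (‖V i k‖ ^ 2 - ‖w s‖ ^ 2) := by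
      rw [integral_sub i3 i1, setIntegral_const, hvol, smul_eq_mul]
    rw [e, ← integral_const_mul, ← integral_const_mul, ← integral_add (i1.const_mul _) (i2.const_mul _)]
    refine (abs_integral_le_integral_abs).trans
      (integral_mono (i3.sub i1).abs ((i1.const_mul _).add (i2.const_mul _)) fun s => ?_)
    simp only [Pi.sub_apply]
    set a := ‖V i k + w s‖ with ha
    set b := ‖w s‖ with hb
    set c := ‖V i k‖ with hc
    have ha0 : 0 ≤ a := norm_nonneg _
    have hb0 : 0 ≤ b := norm_nonneg _
    have hc0 : 0 ≤ c := norm_nonneg _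
    have h1 : c ≤ a + b := by
      have := norm_sub_le (V i k + w s) (w s); rwa [add_sub_cancel_right] at this
    have h2 : b ≤ a + c := by
      have := norm_sub_le (V i k + w s) (V i k); rwa [add_sub_cancel_left] at this
    have h3 : 2 * a * b ≤ κ * b ^ 2 + 1 / κ * a ^ 2 := by
      have h4 : κ * b ^ 2 + 1 / κ * a ^ 2 - 2 * a * b = κ * (b - a / κ) ^ 2 := by
        field_simp; ring
      have : 0 ≤ κ * (b - a / κ) ^ 2 := by positivity
      linarith
    rw [abs_le]
    constructor
    · rcases le_total b c with h | h <;> nlinarith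
    · nlinarith
  rw [Metric.tendsto_nhds]
  intro ε hε
  set κ := ε / (2 * (W + 1)) with hκd
  have hκ : 0 < κ := by positivity
  have hκW : κ * W ≤ ε / 2 := by
    rw [hκd, div_mul_eq_mul_div, div_le_div_iff₀ (by positivity) (by positivity)]
    nlinarith
  have h0 := hD.const_mul (1 + 1/κ)
  rw [mul_zero] at h0
  filter_upwards [h0.eventually (gt_mem_nhds (show 0 < ε/2 by positivity))] with i hi
  rw [Real.dist_eq]
  linarith [hb κ hκ i]

lemma trapSum_tendsto {n q m : ℕ} {tf : ℝ} (htf : 0 < tf)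
    {N : ℕ → ℕ} {t : ℕ → ℕ → ℝ} {d : ℕ → ℝ} (P : ∀ i, Ptn tf (d i) (N i) (t i)) {l : Filter ℕ}
    (hd : Tendsto d l (nhds 0)) {f : ℝ → Eu n → Eu q → Eu m → Eu n}
    (hfc : Continuous fun p : ℝ × Eu n × Eu q × Eu m => f p.1 p.2.1 p.2.2.1 p.2.2.2)
    {xi x'i : ℕ → ℝ → Eu n} {x x' : ℝ → Eu n}
    (hxi : ∀ i, IsW2 tf (xi i) (x'i i)) (hx : IsW2 tf x x') (hxu : UConv l tf xi x)
    (hx2 : Tendsto (fun i => ∫ s in Ioc 0 tf, ‖x'i i s - x' s‖ ^ 2) l (nhds 0))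
    {ϑi : ℕ → Eu m} {θ : Eu m} (hϑ : Tendsto (fun i => ‖ϑi i - θ‖) l (nhds 0))
    {zi : ℕ → ℝ → Eu q} {z : ℝ → Eu q} (hz : ContinuousOn z (Icc 0 tf)) (hzu : UConv l tf zi z)
    (G : Eu n ≃L[ℝ] Eu n) :
    Tendsto (fun i => trapSum (N i) (t i) f (fun v => G.symm v) (xi i) (zi i) (ϑi i)) l
      (nhds (∫ s in Ioc (0:ℝ) tf, ‖G.symm (f s (x s) (z s) θ - x' s)‖ ^ 2)) := by
  have hcomp : ContinuousOn (fun s => f s (x s) (z s) θ) (Icc 0 tf) :=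
    hfc.comp_continuousOn (f := fun s => (s, x s, z s, θ))
      (continuousOn_id.prodMk (hx.cont.prodMk (hz.prodMk continuousOn_const)))
  have hw0 : ML tf (fun s => f s (x s) (z s) θ - x' s) := (ML.of_cont hcomp).sub hx.ml
  have hw : ML tf (fun s => G.symm (f s (x s) (z s) θ - x' s)) :=
    (G.symm : Eu n →L[ℝ] Eu n).comp_memLp' hw0
  unfold trapSum
  refine sumsq_tendsto P hw ?_
  have hproj := proj_tendsto htf P hd hx.ml (fun i => (hxi i).ml) hx2
  set C := ‖(G.symm : Eu n →L[ℝ] Eu n)‖ with hC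
  have hC0 : 0 ≤ C := norm_nonneg _
  rw [Metric.tendsto_nhds]
  intro ε hε
  set M := C ^ 2 + 1 with hM
  have hMp : 0 < M := by positivity
  obtain ⟨η, hη, hηε⟩ : ∃ η > 0, 2 * M * (tf * η ^ 2) ≤ ε / 2 := by
    refine ⟨Real.sqrt (ε / (4 * M * tf)), by positivity, ?_⟩
    rw [Real.sq_sqrt (by positivity)]
    refine le_of_eq ?_
    field_simp
    norm_num
  obtain ⟨r, hr, H⟩ := approx hfc hx.cont hz θ η hη
  have hp2 := hproj.const_mul (2 * M)
  rw [mul_zero] at hp2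
  filter_upwards [hd.eventually (gt_mem_nhds hr), hxu r hr, hzu r hr, hϑ.eventually (gt_mem_nhds hr),
    hp2.eventually (gt_mem_nhds (show 0 < ε/2 by positivity))] with i hi1 hi2 hi3 hi4 hi5
  rw [Real.dist_eq, sub_zero, abs_of_nonneg
    (Finset.sum_nonneg fun k _ => integral_nonneg fun s => sq_nonneg _)]
  refine lt_of_le_of_lt (b := 2 * M * (∑ k ∈ Finset.range (N i), ∫ s in Ioc (t i k) (t i (k+1)),
      ‖(t i (k+1) - t i k)⁻¹ • (∫ r in Ioc (t i k) (t i (k+1)), x'i i r) - x' s‖ ^ 2)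
      + 2 * M * (tf * η ^ 2)) ?_ (by linarith)
  rw [← (P i).sumδ, Finset.sum_mul, Finset.mul_sum, Finset.mul_sum, ← Finset.sum_add_distrib]
  refine Finset.sum_le_sum fun k hk => ?_
  have hk := Finset.mem_range.1 hk
  have hlt := (P i).mono k hk
  have hsub := (P i).sub hk
  have hm := (P i).mesh k hk
  rw [(hxi i).incr ((P i).mem hk.le).1 hlt.le ((P i).mem (show k+1 ≤ N i from hk)).2]
  set I := Ioc (t i k) (t i (k+1)) with hI
  set δ := t i (k+1) - t i k with hδ
  have hvol : volume.real I = δ := by simp [hI, hδ, hlt.le]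
  set A := δ⁻¹ • ∫ s in I, x'i i s with hA
  set p := f (t i k) (xi i (t i k)) (zi i (t i k)) (ϑi i) with hp
  set p' := f (t i (k+1)) (xi i (t i (k+1))) (zi i (t i (k+1))) (ϑi i) with hp'
  have hAx : ML tf (fun s => A - x' s) := (memLp_const _).sub hx.ml
  have i1 : IntegrableOn (fun s => ‖A - x' s‖ ^ 2) I := hAx.sq.mono_set hsub
  have hVw : ML tf (fun s => G.symm (A - (1/2:ℝ) • p - (1/2:ℝ) • p') + G.symm (f s (x s) (z s) θ - x' s)) :=
    MemLp.add (f := fun _ => G.symm (A - (1/2:ℝ) • p - (1/2:ℝ) • p')) (memLp_const _) hw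
  have hRHS : 2 * M * (∫ s in I, ‖A - x' s‖ ^ 2) + 2 * M * (δ * η ^ 2)
      = ∫ s in I, (2 * M * ‖A - x' s‖ ^ 2 + 2 * M * η ^ 2) := by
    rw [integral_add (i1.const_mul _) (integrable_const _), setIntegral_const, hvol, integral_const_mul,
      smul_eq_mul]
    ring
  rw [hRHS]
  refine setIntegral_mono_on (hVw.sq.mono_set hsub) ((i1.const_mul _).add (integrable_const _))
    measurableSet_Ioc fun s hs => ?_
  have hsm : s ∈ Icc 0 tf := Ioc_subset_Icc_self (hsub hs)
  have m1 := (P i).mem hk.le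
  have m2 := (P i).mem (show k+1 ≤ N i from hk)
  have A1 := H s hsm _ m1 (xi i (t i k)) (zi i (t i k)) (ϑi i)
    (by rw [abs_lt]; constructor <;> linarith [hs.1, hs.2]) (hi2 _ m1) (hi3 _ m1) hi4
  have A2 := H s hsm _ m2 (xi i (t i (k+1))) (zi i (t i (k+1))) (ϑi i)
    (by rw [abs_lt]; constructor <;> linarith [hs.1, hs.2]) (hi2 _ m2) (hi3 _ m2) hi4
  rw [← hp] at A1
  rw [← hp'] at A2
  set w := f s (x s) (z s) θ
  have e : (A - (1/2:ℝ) • p - (1/2:ℝ) • p') + (w - x' s)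
      = (A - x' s) + (-((1/2:ℝ) • ((p - w) + (p' - w)))) := by
    module
  have hn : ‖-((1/2:ℝ) • ((p - w) + (p' - w)))‖ ≤ η := by
    rw [norm_neg, norm_smul, Real.norm_of_nonneg (by norm_num)]
    linarith [norm_add_le (p - w) (p' - w)]
  rw [← map_add, e]
  have h1 : ‖G.symm ((A - x' s) + (-((1/2:ℝ) • ((p - w) + (p' - w)))))‖
      ≤ C * ‖(A - x' s) + (-((1/2:ℝ) • ((p - w) + (p' - w))))‖ :=
    (G.symm : Eu n →L[ℝ] Eu n).le_opNorm _
  have h2 := sq2 (A - x' s) (-((1/2:ℝ) • ((p - w) + (p' - w))))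
  set y := (A - x' s) + (-((1/2:ℝ) • ((p - w) + (p' - w))))
  have h3 : ‖-((1/2:ℝ) • ((p - w) + (p' - w)))‖ ^ 2 ≤ η ^ 2 := by gcongr
  calc ‖G.symm y‖ ^ 2 ≤ (C * ‖y‖) ^ 2 := by gcongr
    _ = C ^ 2 * ‖y‖ ^ 2 := by ring
    _ ≤ M * ‖y‖ ^ 2 := by rw [hM]; gcongr; linarith
    _ ≤ M * (2 * (‖A - x' s‖ ^ 2 + η ^ 2)) := by gcongr; linarith
    _ = _ := by ring

lemma ereal_sum (s : Finset ℕ) (g : ℕ → ℝ) :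
    ((∑ k ∈ s, g k : ℝ) : EReal) = ∑ k ∈ s, (g k : EReal) := by
  induction s using Finset.induction_on with
  | empty => simp
  | insert a s ha ih => rw [Finset.sum_insert ha, Finset.sum_insert ha, EReal.coe_add, ih]

lemma detSum_tendsto {n q m : ℕ} {tf : ℝ} (htf : 0 < tf)
    {N : ℕ → ℕ} {t : ℕ → ℕ → ℝ} {d : ℕ → ℝ} (P : ∀ i, Ptn tf (d i) (N i) (t i)) {l : Filter ℕ}
    (hd : Tendsto d l (nhds 0)) {Dxf : ℝ → Eu n → Eu q → Eu m → (Eu n →L[ℝ] Eu n)}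
    (hDc : Continuous fun p : ℝ × Eu n × Eu q × Eu m => Dxf p.1 p.2.1 p.2.2.1 p.2.2.2)
    {xi : ℕ → ℝ → Eu n} {x : ℝ → Eu n} (hx : ContinuousOn x (Icc 0 tf)) (hxu : UConv l tf xi x)
    {ϑi : ℕ → Eu m} {θ : Eu m} (hϑ : Tendsto (fun i => ‖ϑi i - θ‖) l (nhds 0))
    {zi : ℕ → ℝ → Eu q} {z : ℝ → Eu q} (hz : ContinuousOn z (Icc 0 tf)) (hzu : UConv l tf zi z) :
    ∃ D : ℕ → ℝ, (∀ᶠ i in l, detSum (N i) (t i) Dxf (xi i) (zi i) (ϑi i) = (D i : EReal)) ∧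
      Tendsto D l (nhds (-((1/2:ℝ) * ∫ s in Ioc (0:ℝ) tf,
          LinearMap.trace ℝ (Eu n)
            (ContinuousLinearMap.toLinearMap (Dxf s (x s) (z s) θ))))) := by
  let dt : ℕ → ℕ → ℝ := fun i k => LinearMap.det (ContinuousLinearMap.toLinearMap
    ((1 : Eu n →L[ℝ] Eu n) - ((t i (k + 1) - t i k) / 2) •
      Dxf (t i (k + 1)) (xi i (t i (k + 1))) (zi i (t i (k + 1))) (ϑi i)))
  let T : (Eu n →L[ℝ] Eu n) →ₗ[ℝ] ℝ := LinearMap.trace ℝ (Eu n) ∘ₗ (ContinuousLinearMap.coeLM ℝ)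
  have hT : ∀ A : Eu n →L[ℝ] Eu n, LinearMap.trace ℝ (Eu n) (ContinuousLinearMap.toLinearMap A) = T A :=
    fun A => rfl
  have hTc : Continuous T := T.continuous_of_finiteDimensional
  have hcurve : ContinuousOn (fun s => (s, x s, z s, θ)) (Icc 0 tf) :=
    continuousOn_id.prodMk (hx.prodMk (hz.prodMk continuousOn_const))
  have hcomp : ContinuousOn (fun s => Dxf s (x s) (z s) θ) (Icc 0 tf) :=
    hDc.comp_continuousOn hcurve
  have hcompT : ContinuousOn (fun s => T (Dxf s (x s) (z s) θ)) (Icc 0 tf) :=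
    hTc.comp_continuousOn hcomp
  have hTi := (ML.of_cont hcompT).int
  obtain ⟨M0, hM0⟩ := isCompact_Icc.exists_bound_of_continuousOn hcomp
  have hM00 : 0 ≤ M0 := (norm_nonneg _).trans (hM0 0 ⟨le_rfl, htf.le⟩)
  set M := M0 + 1 with hM
  have hMp : 0 < M := by positivity
  have key : ∀ η > (0:ℝ), ∀ᶠ i in l, ∀ k < N i, 0 < dt i k ∧
      |Real.log (dt i k) - (-((1/2:ℝ) * ∫ s in Ioc (t i k) (t i (k+1)), T (Dxf s (x s) (z s) θ)))|
        ≤ (t i (k+1) - t i k) * (η * (M + 1)) := by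
    intro η hη
    obtain ⟨r, hr, H⟩ := logdet n η hη
    obtain ⟨r1, hr1, H1⟩ := approx hDc hx hz θ 1 one_pos
    obtain ⟨r2, hr2, H2⟩ := approx (F := fun a b c e => T (Dxf a b c e)) (hTc.comp hDc) hx hz θ η hη
    have hr3 := lt_min hr1 hr2
    filter_upwards [hd.eventually (gt_mem_nhds (show 0 < r / M by positivity)),
      hd.eventually (gt_mem_nhds hr3), hxu _ hr3, hzu _ hr3, hϑ.eventually (gt_mem_nhds hr3)]
      with i hi0 hi1 hi2 hi3 hi4 k hk
    have hlt := (P i).mono k hk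
    have hsub := (P i).sub hk
    have hm := (P i).mesh k hk
    have m2 := (P i).mem (show k+1 ≤ N i from hk)
    set δ := t i (k+1) - t i k with hδ
    have hδ0 : 0 < δ := sub_pos.2 hlt
    set I := Ioc (t i k) (t i (k+1)) with hI
    have hvol : volume.real I = δ := by simp [hI, hδ, hlt.le]
    set Dk := Dxf (t i (k + 1)) (xi i (t i (k + 1))) (zi i (t i (k + 1))) (ϑi i) with hDk
    have l1 := min_le_left r1 r2
    have l2 := min_le_right r1 r2
    have hB := H1 _ m2 _ m2 (xi i (t i (k + 1))) (zi i (t i (k + 1))) (ϑi i) (by simpa using hr1)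
      ((hi2 _ m2).trans_le l1) ((hi3 _ m2).trans_le l1) (hi4.trans_le l1)
    rw [← hDk] at hB
    have hDM : ‖Dk‖ ≤ M := by
      have := norm_le_norm_add_norm_sub' Dk (Dxf (t i (k+1)) (x (t i (k+1))) (z (t i (k+1))) θ)
      linarith [hM0 _ m2]
    have hAn : ‖-((δ/2) • Dk)‖ ≤ δ / 2 * M := by
      rw [norm_neg, norm_smul, Real.norm_of_nonneg (by positivity)]
      gcongr
    have hAr : ‖-((δ/2) • Dk)‖ < r := by
      rw [lt_div_iff₀ hMp] at hi0
      nlinarith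
    obtain ⟨g1, g2⟩ := H _ hAr
    rw [← sub_eq_add_neg] at g1 g2
    refine ⟨g1, ?_⟩
    rw [hT, map_neg, map_smul, smul_eq_mul] at g2
    have hTs : IntegrableOn (fun s => T (Dxf s (x s) (z s) θ)) I := hTi.mono_set hsub
    have g3 : |δ * T Dk - ∫ s in I, T (Dxf s (x s) (z s) θ)| ≤ η * δ := by
      have e : δ * T Dk - ∫ s in I, T (Dxf s (x s) (z s) θ) = ∫ s in I, (T Dk - T (Dxf s (x s) (z s) θ)) := by
        rw [integral_sub (integrable_const _) hTs, setIntegral_const, hvol, smul_eq_mul]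
      rw [e, ← hvol, ← Real.norm_eq_abs]
      refine norm_setIntegral_le_of_norm_le_const (by simp [hI]) fun s hs => ?_
      exact (H2 s (Ioc_subset_Icc_self (hsub hs)) _ m2 (xi i (t i (k + 1))) (zi i (t i (k + 1))) (ϑi i)
        (by rw [abs_lt]; constructor <;> linarith [hs.1, hs.2])
        ((hi2 _ m2).trans_le l2) ((hi3 _ m2).trans_le l2) (hi4.trans_le l2)).le
    have g4 : η * ‖-((δ/2) • Dk)‖ ≤ η * (δ / 2 * M) := by gcongr
    have hpos1 : 0 ≤ η * (δ * M) := by positivity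
    have hpos2 : 0 ≤ η * δ := by positivity
    have g5 := abs_le.1 (g2.trans g4)
    have g6 := abs_le.1 g3
    change |Real.log (LinearMap.det (ContinuousLinearMap.toLinearMap (1 - (δ/2) • Dk))) - _| ≤ _
    rw [abs_le]
    constructor <;> linarith [g5.1, g5.2, g6.1, g6.2]
  refine ⟨fun i => ∑ k ∈ Finset.range (N i), Real.log (dt i k), ?_, ?_⟩
  · filter_upwards [key 1 one_pos] with i hi
    unfold detSum
    rw [ereal_sum]
    exact Finset.sum_congr rfl fun k hk => elog_pos (hi k (Finset.mem_range.1 hk)).1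
  · simp_rw [hT]
    rw [Metric.tendsto_nhds]
    intro ε hε
    filter_upwards [key (ε / (2 * tf * (M + 1))) (by positivity)] with i hi
    rw [Real.dist_eq, ← (P i).split hTi, Finset.mul_sum, ← Finset.sum_neg_distrib,
      ← Finset.sum_sub_distrib]
    refine ((Finset.abs_sum_le_sum_abs _ _).trans
      (Finset.sum_le_sum fun k hk => (hi k (Finset.mem_range.1 hk)).2)).trans_lt ?_
    rw [← Finset.sum_mul, (P i).sumδ]
    have : tf * (ε / (2 * tf * (M + 1)) * (M + 1)) = ε / 2 := by field_simp
    linarith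


lemma key_conv {n q m : ℕ} {tf : ℝ} (htf : 0 < tf)
    {N : ℕ → ℕ} {t : ℕ → ℕ → ℝ} {d : ℕ → ℝ} (P : ∀ i, Ptn tf (d i) (N i) (t i)) {l : Filter ℕ}
    (hd : Tendsto d l (nhds 0)) {S : Set (Eu m)}
    {f : ℝ → Eu n → Eu q → Eu m → Eu n} {h : ℝ → Eu n → Eu q → Eu m → Eu q}
    (hfc : Continuous fun p : ℝ × Eu n × Eu q × Eu m => f p.1 p.2.1 p.2.2.1 p.2.2.2)
    (hhc : Continuous fun p : ℝ × Eu n × Eu q × Eu m => h p.1 p.2.1 p.2.2.1 p.2.2.2)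
    {Lh : ℝ} (hLh : 0 < Lh)
    (hhLip : ∀ θ ∈ S, ∀ t ∈ Icc (0:ℝ) tf, ∀ (a a' : Eu n) (b b' : Eu q),
      ‖h t a b θ - h t a' b' θ‖ ≤ Lh * (‖a - a'‖ + ‖b - b'‖))
    {Dxf : ℝ → Eu n → Eu q → Eu m → (Eu n →L[ℝ] Eu n)}
    (hDxfc : Continuous fun p : ℝ × Eu n × Eu q × Eu m => Dxf p.1 p.2.1 p.2.2.1 p.2.2.2)
    {ψ : (ℝ → Eu n) → (ℝ → Eu q) → Eu m → ℝ}
    (hψc : ∀ (a : ℝ → Eu n) (b : ℝ → Eu q) (c : Eu m), ContinuousOn a (Icc 0 tf) →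
      ContinuousOn b (Icc 0 tf) → ∀ ε > (0:ℝ), ∃ δ > (0:ℝ),
      ∀ (a' : ℝ → Eu n) (b' : ℝ → Eu q) (c' : Eu m), ContinuousOn a' (Icc 0 tf) →
        ContinuousOn b' (Icc 0 tf) →
        (∀ t ∈ Icc (0:ℝ) tf, ‖a' t - a t‖ ≤ δ) →
        (∀ t ∈ Icc (0:ℝ) tf, ‖b' t - b t‖ ≤ δ) → ‖c' - c‖ ≤ δ →
        |ψ a' b' c' - ψ a b c| ≤ ε)
    {pr : Eu n → Eu q → Eu m → ℝ}
    (hprc : Continuous fun p : Eu n × Eu q × Eu m => pr p.1 p.2.1 p.2.2)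
    (G : Eu n ≃L[ℝ] Eu n)
    {xi x'i : ℕ → ℝ → Eu n} {ζi : ℕ → Eu q} {ϑi : ℕ → Eu m}
    {x x' : ℝ → Eu n} {z0 : Eu q} {θ : Eu m}
    (hxi : ∀ i, IsW2 tf (xi i) (x'i i)) (hx : IsW2 tf x x')
    (hT : Tendsto (fun i => W2dist tf (xi i) (x'i i) x x' + ‖ζi i - z0‖ + ‖ϑi i - θ‖) l (nhds 0))
    {L : ℕ → EReal} {Lv : EReal}
    (hL : ∀ i, TrapVal tf (N i) (t i) S f h Dxf ψ pr (fun v => G.symm v) (xi i) (ζi i) (ϑi i) (L i))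
    (hLv : OMVal tf S f h Dxf ψ pr (fun v => G.symm v) x x' z0 θ Lv) (hθ : θ ∈ S)
    (hev : ∀ᶠ i in l, IsPL tf (N i) (t i) (xi i) ∧ ϑi i ∈ S) : Tendsto L l (nhds Lv) := by
  have hw0 : ∀ i, 0 ≤ W2dist tf (xi i) (x'i i) x x' := fun i => Real.sqrt_nonneg _
  have hW : Tendsto (fun i => W2dist tf (xi i) (x'i i) x x') l (nhds 0) :=
    squeeze_zero hw0 (fun i => by linarith [norm_nonneg (ζi i - z0), norm_nonneg (ϑi i - θ)]) hT
  have hζ : Tendsto (fun i => ‖ζi i - z0‖) l (nhds 0) :=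
    squeeze_zero (fun i => norm_nonneg _) (fun i => by linarith [hw0 i, norm_nonneg (ϑi i - θ)]) hT
  have hϑ : Tendsto (fun i => ‖ϑi i - θ‖) l (nhds 0) :=
    squeeze_zero (fun i => norm_nonneg _) (fun i => by linarith [hw0 i, norm_nonneg (ζi i - z0)]) hT
  obtain ⟨hxu, hx2⟩ := W2_conv htf hxi hx hW
  obtain ⟨z, hz, hzI, hLve⟩ := hLv.2 hθ
  have hch : ∀ i, ∃ zh : ℝ → Eu q, (IsPL tf (N i) (t i) (xi i) ∧ ϑi i ∈ S) →
      IsTrapPath (N i) (t i) h (xi i) (ζi i) (ϑi i) zh ∧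
      L i = elog (ψ (xi i) zh (ϑi i)) + elog (pr (xi i 0) (ζi i) (ϑi i))
        + detSum (N i) (t i) Dxf (xi i) zh (ϑi i)
        - ((((1:ℝ) / 2) * trapSum (N i) (t i) f (fun v => G.symm v) (xi i) zh (ϑi i) : ℝ) : EReal) := by
    intro i
    by_cases hc : IsPL tf (N i) (t i) (xi i) ∧ ϑi i ∈ S
    · obtain ⟨zh, hzh⟩ := (hL i).2 hc
      exact ⟨zh, fun _ => hzh⟩
    · exact ⟨fun _ => 0, fun h => absurd h hc⟩
  choose zi hzi using hch
  have hzu : UConv l tf zi z := z_tendsto htf P hd hhc hLh hhLip hx.cont hxu hζ hϑ hz hzI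
    (hev.mono fun i hi => ⟨hi.2, (hzi i hi).1⟩)
  obtain ⟨D, hD, hDt⟩ := detSum_tendsto htf P hd hDxfc hx.cont hxu hϑ hz hzu
  have hTS := trapSum_tendsto htf P hd hfc hxi hx hxu hx2 hϑ hz hzu G
  have hψt : Tendsto (fun i => ψ (xi i) (zi i) (ϑi i)) l (nhds (ψ x z θ)) := by
    rw [Metric.tendsto_nhds]
    intro ε hε
    obtain ⟨δ, hδ, H⟩ := hψc x z θ hx.cont hz (ε/2) (by positivity)
    filter_upwards [hev, hxu δ hδ, hzu δ hδ, hϑ.eventually (gt_mem_nhds hδ)] with i h1 h2 h3 h4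
    rw [Real.dist_eq]
    refine (H _ _ _ (hxi i).cont (trap_cont (P i) (hzi i h1).1) (fun s hs => (h2 s hs).le)
      (fun s hs => (h3 s hs).le) h4.le).trans_lt (by linarith)
  have hx0 : Tendsto (fun i => xi i 0) l (nhds (x 0)) := by
    rw [Metric.tendsto_nhds]
    intro ε hε
    filter_upwards [hxu ε hε] with i hi
    rw [dist_eq_norm]
    exact hi 0 ⟨le_rfl, htf.le⟩
  have hprt : Tendsto (fun i => pr (xi i 0) (ζi i) (ϑi i)) l (nhds (pr (x 0) z0 θ)) :=
    (hprc.tendsto (x 0, z0, θ)).comp (hx0.prodMk_nhds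
      ((tendsto_iff_norm_sub_tendsto_zero.2 hζ).prodMk_nhds (tendsto_iff_norm_sub_tendsto_zero.2 hϑ)))
  have e1 := (elog_cont.tendsto _).comp hψt
  have e2 := (elog_cont.tendsto _).comp hprt
  have e12 := (EReal.continuousAt_add (p := (elog (ψ x z θ), elog (pr (x 0) z0 θ)))
    (Or.inl (elog_ne_top _)) (Or.inr (elog_ne_top _))).tendsto.comp (e1.prodMk_nhds e2)
  have hR : Tendsto (fun i => D i - (1/2:ℝ) * trapSum (N i) (t i) f (fun v => G.symm v) (xi i) (zi i) (ϑi i))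
    l _ := hDt.sub (hTS.const_mul (1/2:ℝ))
  have e3 := (continuous_coe_real_ereal.tendsto _).comp hR
  have e4 := (EReal.continuousAt_add (p := (_, _)) (Or.inr (EReal.coe_ne_bot _))
    (Or.inr (EReal.coe_ne_top _))).tendsto.comp (e12.prodMk_nhds e3)
  have hLe : Lv = elog (ψ x z θ) + elog (pr (x 0) z0 θ) +
      ((-((1/2:ℝ) * ∫ s in Ioc (0:ℝ) tf, LinearMap.trace ℝ (Eu n)
            (ContinuousLinearMap.toLinearMap (Dxf s (x s) (z s) θ))) -
        (1/2:ℝ) * ∫ s in Ioc (0:ℝ) tf, ‖G.symm (f s (x s) (z s) θ - x' s)‖ ^ 2 : ℝ) : EReal) := by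
    rw [hLve, sub_eq_add_neg, sub_eq_add_neg, add_assoc, ← EReal.coe_neg, ← EReal.coe_neg, ← EReal.coe_add]
    congr 2
    ring
  rw [hLe]
  refine Tendsto.congr' ?_ e4
  filter_upwards [hev, hD] with i h1 h2
  rw [(hzi i h1).2, h2, sub_eq_add_neg _ (Real.toEReal _), ← EReal.coe_neg, add_assoc, ← EReal.coe_add,
    ← sub_eq_add_neg]
  rfl

lemma interp {n : ℕ} {tf d : ℝ} (htf : 0 < tf) {N : ℕ} {t : ℕ → ℝ} (P : Ptn tf d N t)
    {x x' : ℝ → Eu n} (hx : IsW2 tf x x') :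
    ∃ y y' : ℝ → Eu n, IsW2 tf y y' ∧ IsPL tf N t y ∧
      W2dist tf y y' x x' = Real.sqrt (∑ k ∈ Finset.range N, ∫ s in Ioc (t k) (t (k+1)),
      ‖(t (k+1) - t k)⁻¹ • (∫ r in Ioc (t k) (t (k+1)), x' r) - x' s‖ ^ 2) := by
  set A : ℕ → Eu n := fun k => (t (k+1) - t k)⁻¹ • ∫ r in Ioc (t k) (t (k+1)), x' r with hA
  set y' : ℝ → Eu n := fun s => ∑ k ∈ Finset.range N, indicator (Ioc (t k) (t (k+1))) (fun _ => A k) s with hy'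
  have hval : ∀ k < N, ∀ s ∈ Ioc (t k) (t (k+1)), y' s = A k := by
    intro k hk s hs
    rw [hy']
    simp only
    rw [Finset.sum_eq_single k, indicator_of_mem hs]
    · intro j hj hjk
      refine indicator_of_notMem (fun hs' => ?_) _
      have hj := Finset.mem_range.1 hj
      rcases lt_or_gt_of_ne hjk with h | h
      · linarith [P.le (show j+1 ≤ k from h) hk.le, hs.1, hs'.2]
      · linarith [P.le (show k+1 ≤ j from h) hj.le, hs'.1, hs.2]
    · intro hk'; exact absurd (Finset.mem_range.2 hk) hk'
  have hmem : MemLp y' 2 (volume.restrict (Icc 0 tf)) := by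
    refine memLp_finsetSum _ fun k _ => ?_
    exact (memLp_const (A k)).indicator measurableSet_Ioc
  have hW : IsW2 tf (fun s => x 0 + ∫ r in Ioc 0 s, y' r) y' := by
    refine ⟨hmem.integrable (by norm_num), hmem.norm.integrable_sq, fun s _ => ?_⟩
    simp
  refine ⟨_, y', hW, ⟨hW.cont, fun k hk => ?_⟩, ?_⟩
  · refine ⟨x 0 + (∫ r in Ioc 0 (t k), y' r) - t k • A k, A k, fun s hs => ?_⟩
    have hi := hW.incr (P.mem hk.le).1 hs.1 (hs.2.trans (P.mem (show k+1 ≤ N from hk)).2)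
    have e : ∫ r in Ioc (t k) s, y' r = (s - t k) • A k := by
      rw [setIntegral_congr_fun measurableSet_Ioc (g := fun _ => A k)
        (fun r hr => hval k hk r ⟨hr.1, hr.2.trans hs.2⟩), setIntegral_const]
      simp [hs.1]
    rw [e, sub_eq_iff_eq_add] at hi
    refine Eq.trans hi ?_
    module
  · unfold W2dist
    have hyx : ML tf (fun s => y' s - x' s) := hW.ml.sub hx.ml
    rw [← P.split hyx.sq]
    simp only [Ioc_self, Measure.restrict_empty, integral_zero_measure, add_zero, sub_self, norm_zero,
      ne_eq, OfNat.ofNat_ne_zero, not_false_eq_true, zero_pow, zero_add]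
    congr 1
    refine Finset.sum_congr rfl fun k hk => setIntegral_congr_fun measurableSet_Ioc fun s hs => ?_
    rw [hval k (Finset.mem_range.1 hk) s hs]

/-- Theorem 3.14: the trapezoidally-discretized joint state-path and
parameter log-posteriors `ℓ̂_i` hypo-converge, on `𝒵 = W²_n × ℝ^q × ℝ^m` with the
`W²`-norm topology on the first factor, to the continuous-time (Onsager–Machlup)
log-posterior `ℓ`.  Hypo-convergence is spelled out sequentially: (a)
`limsup ℓ̂_i(ζ_i) ≤ ℓ(ζ)` along every convergent sequence `ζ_i → ζ` in `𝒵`, and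
(b) every `ζ ∈ 𝒵` is the limit of a sequence with `liminf ℓ̂_i(ζ_i) ≥ ℓ(ζ)`. -/
theorem stmt14 {n q m : ℕ} (tf : ℝ) (htf : 0 < tf)
    -- nested partitions with vanishing mesh
    (N : ℕ → ℕ) (hN1 : ∀ i, 1 ≤ N i) (tP : ℕ → ℕ → ℝ)
    (htP0 : ∀ i, tP i 0 = 0) (htPN : ∀ i, tP i (N i) = tf)
    (htPmono : ∀ i, ∀ k < N i, tP i k < tP i (k + 1))
    (hnested : ∀ i, ∀ k ≤ N i, ∃ k' ≤ N (i + 1), tP (i + 1) k' = tP i k)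
    (hmesh : Tendsto (fun i => ⨆ k : Fin (N i), (tP i (k.1 + 1) - tP i k.1))
      atTop (nhds 0))
    -- closed parameter set
    (S : Set (Eu m)) (hS : IsClosed S)
    -- dynamics and their regularity
    (f : ℝ → Eu n → Eu q → Eu m → Eu n) (h : ℝ → Eu n → Eu q → Eu m → Eu q)
    (hfc : Continuous fun p : ℝ × Eu n × Eu q × Eu m => f p.1 p.2.1 p.2.2.1 p.2.2.2)
    (hhc : Continuous fun p : ℝ × Eu n × Eu q × Eu m => h p.1 p.2.1 p.2.2.1 p.2.2.2)
    (ρf ρh : ℝ → ℝ)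
    (hρ : Tendsto (fun ε => ρf ε + ρh ε) (nhdsWithin 0 (Ioi 0)) (nhds 0))
    (hfu : ∀ ε > (0:ℝ), ∀ t ∈ Icc (0:ℝ) tf, ∀ t' ∈ Icc (0:ℝ) tf,
      ∀ (a a' : Eu n) (b b' : Eu q) (c c' : Eu m), c ∈ S → c' ∈ S →
      |t - t'| ≤ ε → ‖a - a'‖ ≤ ε → ‖b - b'‖ ≤ ε → ‖c - c'‖ ≤ ε →
      ‖f t a b c - f t' a' b' c'‖ ≤ ρf ε)
    (hhu : ∀ ε > (0:ℝ), ∀ t ∈ Icc (0:ℝ) tf, ∀ t' ∈ Icc (0:ℝ) tf,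
      ∀ (a a' : Eu n) (b b' : Eu q) (c c' : Eu m), c ∈ S → c' ∈ S →
      |t - t'| ≤ ε → ‖a - a'‖ ≤ ε → ‖b - b'‖ ≤ ε → ‖c - c'‖ ≤ ε →
      ‖h t a b c - h t' a' b' c'‖ ≤ ρh ε)
    (Lf Lh : ℝ) (hLf : 0 < Lf) (hLh : 0 < Lh)
    (hfLip : ∀ θ ∈ S, ∀ t ∈ Icc (0:ℝ) tf, ∀ (a a' : Eu n) (b b' : Eu q),
      ‖f t a b θ - f t a' b' θ‖ ≤ Lf * (‖a - a'‖ + ‖b - b'‖))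
    (hhLip : ∀ θ ∈ S, ∀ t ∈ Icc (0:ℝ) tf, ∀ (a a' : Eu n) (b b' : Eu q),
      ‖h t a b θ - h t a' b' θ‖ ≤ Lh * (‖a - a'‖ + ‖b - b'‖))
    (hmeshLip : ∀ i, ∀ k < N i, (Lf + Lh) * (tP i (k + 1) - tP i k) < 2)
    -- the Jacobian of `f` with respect to its second argument
    (Dxf : ℝ → Eu n → Eu q → Eu m → (Eu n →L[ℝ] Eu n))
    (hDxf : ∀ (t : ℝ) (a : Eu n) (b : Eu q) (c : Eu m),
      HasFDerivAt (fun ξ => f t ξ b c) (Dxf t a b c) a)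
    (hDxfc : Continuous fun p : ℝ × Eu n × Eu q × Eu m =>
      Dxf p.1 p.2.1 p.2.2.1 p.2.2.2)
    -- measurement likelihood: nonnegative, continuous w.r.t. the supremum norms
    (ψ : (ℝ → Eu n) → (ℝ → Eu q) → Eu m → ℝ)
    (hψ0 : ∀ a b c, 0 ≤ ψ a b c)
    (hψc : ∀ (a : ℝ → Eu n) (b : ℝ → Eu q) (c : Eu m), ContinuousOn a (Icc 0 tf) →
      ContinuousOn b (Icc 0 tf) → ∀ ε > (0:ℝ), ∃ δ > (0:ℝ),
      ∀ (a' : ℝ → Eu n) (b' : ℝ → Eu q) (c' : Eu m), ContinuousOn a' (Icc 0 tf) →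
        ContinuousOn b' (Icc 0 tf) →
        (∀ t ∈ Icc (0:ℝ) tf, ‖a' t - a t‖ ≤ δ) →
        (∀ t ∈ Icc (0:ℝ) tf, ‖b' t - b t‖ ≤ δ) → ‖c' - c‖ ≤ δ →
        |ψ a' b' c' - ψ a b c| ≤ ε)
    -- prior: nonnegative, continuous, vanishing outside `int S`
    (pr : Eu n → Eu q → Eu m → ℝ)
    (hpr0 : ∀ a b c, 0 ≤ pr a b c)
    (hprc : Continuous fun p : Eu n × Eu q × Eu m => pr p.1 p.2.1 p.2.2)
    (hprv : ∀ a b c, c ∉ interior S → pr a b c = 0)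
    -- invertible diffusion matrix
    (G : Eu n ≃L[ℝ] Eu n) :
    -- (a)
    (∀ (xi x'i : ℕ → ℝ → Eu n) (ζi : ℕ → Eu q) (ϑi : ℕ → Eu m)
      (x x' : ℝ → Eu n) (z0 : Eu q) (θ : Eu m),
      (∀ i, IsW2 tf (xi i) (x'i i)) → IsW2 tf x x' →
      Tendsto (fun i => W2dist tf (xi i) (x'i i) x x' + ‖ζi i - z0‖ + ‖ϑi i - θ‖)
        atTop (nhds 0) →
      ∀ (L : ℕ → EReal) (Lv : EReal),
        (∀ i, TrapVal tf (N i) (tP i) S f h Dxf ψ pr (fun v => G.symm v)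
          (xi i) (ζi i) (ϑi i) (L i)) →
        OMVal tf S f h Dxf ψ pr (fun v => G.symm v) x x' z0 θ Lv →
        limsup L atTop ≤ Lv) ∧
    -- (b)
    (∀ (x x' : ℝ → Eu n) (z0 : Eu q) (θ : Eu m), IsW2 tf x x' →
      ∃ (xi x'i : ℕ → ℝ → Eu n) (ζi : ℕ → Eu q) (ϑi : ℕ → Eu m),
        (∀ i, IsW2 tf (xi i) (x'i i)) ∧
        Tendsto (fun i => W2dist tf (xi i) (x'i i) x x' + ‖ζi i - z0‖ + ‖ϑi i - θ‖)
          atTop (nhds 0) ∧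
        ∀ (L : ℕ → EReal) (Lv : EReal),
          (∀ i, TrapVal tf (N i) (tP i) S f h Dxf ψ pr (fun v => G.symm v)
            (xi i) (ζi i) (ϑi i) (L i)) →
          OMVal tf S f h Dxf ψ pr (fun v => G.symm v) x x' z0 θ Lv →
          Lv ≤ liminf L atTop) := by
  set d : ℕ → ℝ := fun i => ⨆ k : Fin (N i), (tP i (k.1 + 1) - tP i k.1) with hd
  have P : ∀ i, Ptn tf (d i) (N i) (tP i) := fun i =>
    ⟨htP0 i, htPN i, htPmono i, fun k hk =>
      le_ciSup (f := fun k : Fin (N i) => (tP i (k.1 + 1) - tP i k.1)) (Set.finite_range _).bddAbove ⟨k, hk⟩⟩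
  constructor
  · intro xi x'i ζi ϑi x x' z0 θ hxi hx hT L Lv hL hLv
    have hϑ : Tendsto ϑi atTop (nhds θ) := by
      refine tendsto_iff_norm_sub_tendsto_zero.2 (squeeze_zero (fun i => norm_nonneg _) (fun i => ?_) hT)
      have : 0 ≤ W2dist tf (xi i) (x'i i) x x' := Real.sqrt_nonneg _
      linarith [norm_nonneg (ζi i - z0)]
    refine le_of_forall_gt_imp_ge_of_dense fun c hc => ?_
    refine limsup_le_of_le (by isBoundedDefault) ?_
    by_cases hθ : θ ∈ S
    · have hK := key_conv htf P (l := atTop ⊓ 𝓟 {i | IsPL tf (N i) (tP i) (xi i) ∧ ϑi i ∈ S})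
        (hmesh.mono_left inf_le_left) hfc hhc hLh hhLip hDxfc hψc hprc G hxi hx
        (hT.mono_left inf_le_left) hL hLv hθ (eventually_inf_principal.2 (Eventually.of_forall fun i hi => hi))
      have := eventually_inf_principal.1 (hK.eventually (gt_mem_nhds hc))
      filter_upwards [this] with i hi
      by_cases hc' : IsPL tf (N i) (tP i) (xi i) ∧ ϑi i ∈ S
      · exact (hi hc').le
      · rw [(hL i).1 hc']; exact bot_le
    · filter_upwards [hϑ.eventually (hS.isOpen_compl.mem_nhds hθ)] with i hi
      rw [(hL i).1 fun h => hi h.2]; exact bot_le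
  · intro x x' z0 θ hx
    choose y y' hy hPL hdist using fun i => interp htf (P i) hx
    have hT : Tendsto (fun i => W2dist tf (y i) (y' i) x x' + ‖z0 - z0‖ + ‖θ - θ‖) atTop (nhds 0) := by
      have h1 := proj_tendsto htf P hmesh hx.ml (fun _ => hx.ml) (by simp)
      have h2 := (Real.continuous_sqrt.tendsto 0).comp h1
      rw [Real.sqrt_zero] at h2
      refine h2.congr fun i => ?_
      simp only [sub_self, norm_zero, add_zero, hdist]
      rfl
    refine ⟨y, y', fun _ => z0, fun _ => θ, hy, hT, ?_⟩
    intro L Lv hL hLv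
    by_cases hθ : θ ∈ S
    · have hK := key_conv htf P hmesh hfc hhc hLh hhLip hDxfc hψc hprc G hy hx hT hL hLv hθ
        (Eventually.of_forall fun i => ⟨hPL i, hθ⟩)
      exact hK.liminf_eq.ge
    · rw [hLv.1 hθ]; exact bot_le
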